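/- arXiv:1203.6623 — 4 statements merged into one kernel-verified Lean document; each statement's English description precedes it below -/
import Mathlib

section
/- A simple graph G with at least two vertices is (2,3)-tight if and only if there is a finite sequence of simple graphs G_0, G_1, …, G_n with G_0 = K_2 (a single edge), G_n = G, and each G_{i+1} obtained from G_i by either a vertex addition or an edge splitting operation. -/
open Finset

/-- A finite simple graph given by a finite vertex set of natural numbers and a finite set of
edges (unordered pairs of distinct vertices). -/
structure FinGraph where
  verts : Finset ℕ
  edges : Finset (Sym2 ℕ)
  not_isDiag : ∀ e ∈ edges, ¬ e.IsDiag
  mem_verts : ∀ e ∈ edges, ∀ v ∈ e, v ∈ verts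

/-- Adjacency in a `FinGraph`. -/
def FinGraph.Adj (G : FinGraph) (a b : ℕ) : Prop := s(a, b) ∈ G.edges

/-- `(V', E')` is a subgraph of `G`: the vertices and edges come from `G` and every endpoint
of an edge of `E'` lies in `V'`. -/
def SubgraphPair (G : FinGraph) (V' : Finset ℕ) (E' : Finset (Sym2 ℕ)) : Prop :=
  V' ⊆ G.verts ∧ E' ⊆ G.edges ∧ ∀ e ∈ E', ∀ v ∈ e, v ∈ V'

/-- Vertex addition: add a new vertex `v` of degree 2 joined to two distinct existing
vertices `a` and `b`. -/
def VertexAddition (G G' : FinGraph) : Prop :=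
  ∃ v a b : ℕ, v ∉ G.verts ∧ a ∈ G.verts ∧ b ∈ G.verts ∧ a ≠ b ∧
    G'.verts = insert v G.verts ∧
    G'.edges = insert s(v, a) (insert s(v, b) G.edges)

/-- Edge splitting: remove an edge `xy`, add a new vertex `v` of degree 3 joined to `x`, `y`
and a third existing vertex `z` distinct from `x` and `y`. -/
def EdgeSplit (G G' : FinGraph) : Prop :=
  ∃ v x y z : ℕ, v ∉ G.verts ∧ x ∈ G.verts ∧ y ∈ G.verts ∧ z ∈ G.verts ∧
    z ≠ x ∧ z ≠ y ∧ s(x, y) ∈ G.edges ∧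
    G'.verts = insert v G.verts ∧
    G'.edges = insert s(v, x) (insert s(v, y) (insert s(v, z) (G.edges.erase s(x, y))))

/-- `G` is a copy of `K₂`: a single edge. -/
def IsK2 (G : FinGraph) : Prop :=
  ∃ a b : ℕ, a ≠ b ∧ G.verts = {a, b} ∧ G.edges = {s(a, b)}

/-- `G` is (2,3)-tight: every subgraph with at least one edge satisfies `|E'| ≤ 2|V'| − 3`,
and `|E| = 2|V| − 3`. -/
def Tight23 (G : FinGraph) : Prop :=
  (∀ V' E', SubgraphPair G V' E' → E'.Nonempty → (E'.card : ℤ) ≤ 2 * V'.card - 3) ∧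
  (G.edges.card : ℤ) = 2 * G.verts.card - 3

/-!
Both moves attach a new vertex `v` to a set `N` of old vertices, and attaching `v` to `N` keeps a
sparse edge set `E` sparse exactly when every nonempty vertex set `X` spans at most
`2|X| - 1 - |N ∩ X|` edges of `E`. This inequality makes both moves preserve tightness. Conversely,
a tight graph on at least three vertices has a vertex `v` of degree 2 or 3. If the degree is 2,
deleting `v` undoes a vertex addition. If it is 3, some edge between two neighbours of `v` can be
put in its place: otherwise each pair of neighbours lies in a set `X` spanning `2|X| - 3` edges, and
by supermodularity of the number of spanned edges the three neighbours lie in one such set, which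
together with `v` spans too many edges.
-/

section EdgeSet

variable {α : Type*} [DecidableEq α] {E F : Finset (Sym2 α)} {N V X Y : Finset α} {a b v : α}

lemma sym2_inter_sym2 (X Y : Finset α) : X.sym2 ∩ Y.sym2 = (X ∩ Y).sym2 := by
  ext e
  simp only [mem_inter, mem_sym2_iff, forall₂_and]

lemma card_inter_sym2_add_card_inter_sym2_le (E : Finset (Sym2 α)) (X Y : Finset α) :
    #(E ∩ X.sym2) + #(E ∩ Y.sym2) ≤ #(E ∩ (X ∪ Y).sym2) + #(E ∩ (X ∩ Y).sym2) := by
  rw [← card_union_add_card_inter, ← inter_union_distrib_left, ← inter_inter_distrib_left,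
    sym2_inter_sym2]
  gcongr
  exact union_subset (sym2_mono subset_union_left) (sym2_mono subset_union_right)

lemma card_insert_inter_sym2 (h : s(a, b) ∉ E) (X : Finset α) :
    #(insert s(a, b) E ∩ X.sym2) = #(E ∩ X.sym2) + if a ∈ X ∧ b ∈ X then 1 else 0 := by
  split_ifs with hab
  · rw [insert_inter_of_mem (mk_mem_sym2_iff.2 hab), card_insert_of_notMem (by simp [h])]
  · rw [insert_inter_of_notMem (mt mk_mem_sym2_iff.1 hab), add_zero]

lemma inter_sym2_insert (hv : ∀ e ∈ E, v ∉ e) (X : Finset α) :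
    E ∩ (insert v X).sym2 = E ∩ X.sym2 := by
  ext e
  simp only [mem_inter, mem_sym2_iff, mem_insert]
  grind

lemma exists_card_filter_mem_lt {k : ℕ} (h : #E * 2 < #V * k) :
    ∃ v ∈ V, #{e ∈ E | v ∈ e} < k := by
  by_contra! hdeg
  refine h.not_ge (card_mul_le_card_mul (fun v e ↦ v ∈ e) hdeg fun e _ ↦ ?_)
  calc #{v ∈ V | v ∈ e} ≤ #e.toFinset :=
        card_le_card fun v hv ↦ Sym2.mem_toFinset.2 (mem_filter.1 hv).2
    _ ≤ 2 := by rw [Sym2.card_toFinset]; split_ifs <;> simp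

/-- The edge set `E` together with edges joining `v` to every vertex in `N`. In the applications
`v` is a new vertex, and `N` is the set of its neighbours. -/
def attachVertex (v : α) (N : Finset α) (E : Finset (Sym2 α)) : Finset (Sym2 α) :=
  N.image (s(v, ·)) ∪ E

lemma attachVertex_insert :
    attachVertex v (insert a N) E = insert s(v, a) (attachVertex v N E) := by
  simp [attachVertex, image_insert, insert_union]

lemma attachVertex_singleton : attachVertex v {a} E = insert s(v, a) E := by
  rw [attachVertex, image_singleton, insert_eq]

lemma card_image_mk (v : α) (N : Finset α) : #(N.image (s(v, ·))) = #N :=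
  card_image_of_injective _ fun _ _ ↦ Sym2.congr_right.1

lemma disjoint_image_mk (hv : ∀ e ∈ E, v ∉ e) : Disjoint (N.image (s(v, ·))) E := by
  simp only [disjoint_left, forall_mem_image]
  exact fun w _ hw ↦ hv _ hw (Sym2.mem_mk_left v w)

lemma card_attachVertex (hv : ∀ e ∈ E, v ∉ e) : #(attachVertex v N E) = #N + #E := by
  rw [attachVertex, card_union_of_disjoint (disjoint_image_mk hv), card_image_mk]

lemma attachVertex_inter_sym2 (hX : v ∉ X) : attachVertex v N E ∩ X.sym2 = E ∩ X.sym2 := by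
  ext e
  simp only [attachVertex, mem_inter, mem_union, mem_image, mem_sym2_iff]
  grind [Sym2.mem_mk_left]

lemma attachVertex_inter_sym2_insert (hv : ∀ e ∈ E, v ∉ e) (hN : v ∉ N) (X : Finset α) :
    attachVertex v N E ∩ (insert v X).sym2 = attachVertex v (N ∩ X) (E ∩ X.sym2) := by
  have hstar : N.image (s(v, ·)) ∩ (insert v X).sym2 = (N ∩ X).image (s(v, ·)) := by
    ext e
    simp only [mem_inter, mem_image]
    grind [mk_mem_sym2_iff]
  rw [attachVertex, union_inter_distrib_right, inter_sym2_insert hv, hstar, attachVertex]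

lemma card_attachVertex_inter_sym2_insert (hv : ∀ e ∈ E, v ∉ e) (hN : v ∉ N) (X : Finset α) :
    #(attachVertex v N E ∩ (insert v X).sym2) = #(N ∩ X) + #(E ∩ X.sym2) := by
  rw [attachVertex_inter_sym2_insert hv hN,
    card_attachVertex fun e he ↦ hv e (mem_of_mem_inter_left he)]

/-- `(2,3)`-sparsity as a property of an edge set alone: each vertex set `X` spanning an edge, that
is, with `E ∩ X.sym2` nonempty, spans at most `2|X| - 3` edges. Taking `X` to be a singleton shows
that a sparse edge set has no loops. -/
def IsLamanSparse (E : Finset (Sym2 α)) : Prop :=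
  ∀ X : Finset α, (E ∩ X.sym2).Nonempty → #(E ∩ X.sym2) + 3 ≤ 2 * #X

/-- `X` spans at least `2|X| - 3` edges of `E`. In a sparse edge set such an `X` with at least two
vertices spans exactly that many, so it obstructs adding a further edge between two of its
vertices. -/
def IsTightSet (E : Finset (Sym2 α)) (X : Finset α) : Prop :=
  2 * #X ≤ #(E ∩ X.sym2) + 3

namespace IsLamanSparse

lemma mono (hF : IsLamanSparse F) (h : E ⊆ F) : IsLamanSparse E := fun X hX ↦
  have hEF : E ∩ X.sym2 ⊆ F ∩ X.sym2 := inter_subset_inter_right h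
  (Nat.add_le_add_right (card_le_card hEF) 3).trans (hF X (hX.mono hEF))

lemma card_inter_sym2_le (hE : IsLamanSparse E) (hX : 2 ≤ #X) :
    #(E ∩ X.sym2) + 3 ≤ 2 * #X := by
  rcases (E ∩ X.sym2).eq_empty_or_nonempty with h | h
  · rw [h, card_empty]
    omega
  · exact hE X h

lemma inter_sym2_eq_empty (hE : IsLamanSparse E) (hX : #X ≤ 1) : E ∩ X.sym2 = ∅ := by
  by_contra h
  have := hE X (nonempty_iff_ne_empty.2 h)
  omega

lemma attachVertex_iff (hv : ∀ e ∈ E, v ∉ e) (hN : v ∉ N) :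
    IsLamanSparse (attachVertex v N E) ↔
      IsLamanSparse E ∧ ∀ X, X.Nonempty → #(N ∩ X) + #(E ∩ X.sym2) < 2 * #X := by
  have hcount := card_attachVertex_inter_sym2_insert hv hN
  refine ⟨fun h ↦ ⟨h.mono subset_union_right, fun X hX ↦ ?_⟩, fun ⟨hE, h⟩ X hX ↦ ?_⟩
  · have hpos := hX.card_pos
    have hle := card_insert_le v X
    rcases (attachVertex v N E ∩ (insert v X).sym2).eq_empty_or_nonempty with h0 | h0
    · rw [← hcount, h0, card_empty]
      omega
    · have := h _ h0
      rw [hcount] at this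
      omega
  · by_cases hvX : v ∈ X
    · obtain ⟨Y, hvY, rfl⟩ : ∃ Y, v ∉ Y ∧ X = insert v Y :=
        ⟨X.erase v, notMem_erase v X, (insert_erase hvX).symm⟩
      have hY : Y.Nonempty := by
        by_contra! rfl
        simpa using hX.card_pos.trans_eq (hcount ∅)
      have := h Y hY
      rw [hcount, card_insert_of_notMem hvY]
      omega
    · rw [attachVertex_inter_sym2 hvX] at hX ⊢
      exact hE X hX

lemma card_inter_add_card_inter_sym2_lt (hE : IsLamanSparse E) (hX : X.Nonempty)
    (hN : #(N ∩ X) ≤ 2) : #(N ∩ X) + #(E ∩ X.sym2) < 2 * #X := by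
  rcases (one_le_card.2 hX).eq_or_lt with h1 | h2
  · have hNX : #(N ∩ X) ≤ #X := card_le_card inter_subset_right
    rw [hE.inter_sym2_eq_empty h1.ge, card_empty]
    omega
  · have := hE.card_inter_sym2_le h2
    omega

lemma attachVertex_of_card_le_two (hE : IsLamanSparse E) (hv : ∀ e ∈ E, v ∉ e) (hN : v ∉ N)
    (hcard : #N ≤ 2) : IsLamanSparse (attachVertex v N E) :=
  (attachVertex_iff hv hN).2 ⟨hE, fun _ hX ↦ hE.card_inter_add_card_inter_sym2_lt hX <|
    (card_le_card inter_subset_left).trans hcard⟩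

lemma attachVertex_of_insert (hab : s(a, b) ∉ E) (hE : IsLamanSparse (insert s(a, b) E))
    (hv : ∀ e ∈ E, v ∉ e) (hN : v ∉ N) (ha : a ∈ N) (hb : b ∈ N) (hcard : #N ≤ 3) :
    IsLamanSparse (attachVertex v N E) := by
  have hE' : IsLamanSparse E := hE.mono (subset_insert _ _)
  refine (attachVertex_iff hv hN).2 ⟨hE', fun X hX ↦ ?_⟩
  by_cases hNX : N ⊆ X
  · have habX : a ∈ X ∧ b ∈ X := ⟨hNX ha, hNX hb⟩
    have hsparse := hE X ⟨s(a, b), by simp [habX]⟩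
    rw [card_insert_inter_sym2 hab, if_pos habX] at hsparse
    rw [inter_eq_left.2 hNX]
    omega
  · have hlt : #(N ∩ X) < #N :=
      card_lt_card (inter_subset_left.ssubset_of_ne (mt inter_eq_left.1 hNX))
    exact hE'.card_inter_add_card_inter_sym2_lt hX (by omega)

lemma exists_isTightSet_of_not_insert (hE : IsLamanSparse E)
    (h : s(a, b) ∉ E → ¬ IsLamanSparse (insert s(a, b) E)) :
    ∃ X, a ∈ X ∧ b ∈ X ∧ IsTightSet E X := by
  by_cases hab : s(a, b) ∈ E
  · have hpos : 0 < #(E ∩ ({a, b} : Finset α).sym2) := card_pos.2 ⟨s(a, b), by simp [hab]⟩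
    have hle : #{a, b} ≤ 2 := card_le_two
    exact ⟨{a, b}, by simp, by simp, by unfold IsTightSet; omega⟩
  · have hnot := h hab
    simp only [IsLamanSparse, not_forall, not_le] at hnot
    obtain ⟨X, hne, hX⟩ := hnot
    by_cases habX : a ∈ X ∧ b ∈ X
    · rw [card_insert_inter_sym2 hab, if_pos habX] at hX
      exact ⟨X, habX.1, habX.2, by unfold IsTightSet; omega⟩
    · rw [insert_inter_of_notMem (mt mk_mem_sym2_iff.1 habX)] at hne hX
      exact absurd (hE X hne) hX.not_ge

end IsLamanSparse

namespace IsTightSet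

variable {A B C : Finset α} {x y z : α}

lemma union (hE : IsLamanSparse E) (hA : IsTightSet E A) (hB : IsTightSet E B)
    (hAB : 2 ≤ #(A ∩ B)) : IsTightSet E (A ∪ B) := by
  have hinter := hE.card_inter_sym2_le hAB
  have hsuper := card_inter_sym2_add_card_inter_sym2_le E A B
  have hcard := card_union_add_card_inter A B
  unfold IsTightSet at *
  omega

lemma union_union (hE : IsLamanSparse E) (hA : IsTightSet E A) (hB : IsTightSet E B)
    (hC : IsTightSet E C) (hAB : #(A ∩ B) = 1) (hAC : #(A ∩ C) ≤ 1) (hBC : #(B ∩ C) ≤ 1)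
    (hx : x ∈ A ∩ C) (hz : z ∈ B ∩ C) (hxz : x ≠ z) : IsTightSet E (A ∪ B ∪ C) := by
  have hdisj {P Q : Finset α} (h : #(P ∩ Q) ≤ 1) : Disjoint (E ∩ P.sym2) (E ∩ Q.sym2) := by
    rw [disjoint_iff_inter_eq_empty, ← inter_inter_distrib_left, sym2_inter_sym2,
      hE.inter_sym2_eq_empty h]
  have hedges : #(E ∩ A.sym2) + #(E ∩ B.sym2) + #(E ∩ C.sym2) ≤ #(E ∩ (A ∪ B ∪ C).sym2) := by
    rw [← card_union_of_disjoint (hdisj hAB.le), ← card_union_of_disjoint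
      (disjoint_union_left.2 ⟨hdisj hAC, hdisj hBC⟩), ← inter_union_distrib_left,
      ← inter_union_distrib_left]
    gcongr
    refine union_subset (union_subset ?_ ?_) ?_ <;> exact sym2_mono (by grind)
  have hinter : 2 ≤ #((A ∪ B) ∩ C) := one_lt_card.2 ⟨x, by grind, z, by grind, hxz⟩
  have hcard := card_union_add_card_inter A B
  have hcard' := card_union_add_card_inter (A ∪ B) C
  unfold IsTightSet at *
  omega

lemma exists_of_pairs (hE : IsLamanSparse E) (hne : x ≠ z)
    (hxy : ∃ A, x ∈ A ∧ y ∈ A ∧ IsTightSet E A) (hyz : ∃ B, y ∈ B ∧ z ∈ B ∧ IsTightSet E B)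
    (hxz : ∃ C, x ∈ C ∧ z ∈ C ∧ IsTightSet E C) :
    ∃ X, x ∈ X ∧ y ∈ X ∧ z ∈ X ∧ IsTightSet E X := by
  obtain ⟨A, hxA, hyA, hA⟩ := hxy
  obtain ⟨B, hyB, hzB, hB⟩ := hyz
  obtain ⟨C, hxC, hzC, hC⟩ := hxz
  by_cases hAB : 2 ≤ #(A ∩ B)
  · exact ⟨A ∪ B, by simp [*], by simp [*], by simp [*], union hE hA hB hAB⟩
  by_cases hAC : 2 ≤ #(A ∩ C)
  · exact ⟨A ∪ C, by simp [*], by simp [*], by simp [*], union hE hA hC hAC⟩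
  by_cases hBC : 2 ≤ #(B ∩ C)
  · exact ⟨B ∪ C, by simp [*], by simp [*], by simp [*], union hE hB hC hBC⟩
  have hAB1 : 1 ≤ #(A ∩ B) := card_pos.2 ⟨y, mem_inter.2 ⟨hyA, hyB⟩⟩
  exact ⟨A ∪ B ∪ C, by simp [*], by simp [*], by simp [*],
    union_union hE hA hB hC (by omega) (by omega) (by omega) (mem_inter.2 ⟨hxA, hxC⟩)
      (mem_inter.2 ⟨hzB, hzC⟩) hne⟩

end IsTightSet

lemma IsLamanSparse.exists_insert (hE : IsLamanSparse E) (hN : #N = 3)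
    (h : ∀ X, N ⊆ X → ¬ IsTightSet E X) :
    ∃ a ∈ N, ∃ b ∈ N, a ≠ b ∧ s(a, b) ∉ E ∧ IsLamanSparse (insert s(a, b) E) := by
  by_contra! hinsert
  have htight (a) (ha : a ∈ N) (b) (hb : b ∈ N) (hab : a ≠ b) :
      ∃ X, a ∈ X ∧ b ∈ X ∧ IsTightSet E X :=
    hE.exists_isTightSet_of_not_insert (hinsert a ha b hb hab)
  obtain ⟨x, y, z, hxy, hxz, hyz, rfl⟩ := card_eq_three.1 hN
  obtain ⟨X, hx, hy, hz, hX⟩ := IsTightSet.exists_of_pairs hE hxz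
    (htight x (by simp) y (by simp) hxy) (htight y (by simp) z (by simp) hyz)
    (htight x (by simp) z (by simp) hxz)
  exact h X (by simp [insert_subset_iff, *]) hX

end EdgeSet

namespace FinGraph

variable {G : FinGraph} {v x y : ℕ}

lemma edges_subset_sym2 (G : FinGraph) : G.edges ⊆ G.verts.sym2 := fun e he ↦
  mem_sym2_iff.2 (G.mem_verts e he)

lemma notMem_of_notMem_verts (hv : v ∉ G.verts) : ∀ e ∈ G.edges, v ∉ e := fun e he hve ↦
  hv (G.mem_verts e he v hve)

lemma ne_of_mk_mem_edges (h : s(x, y) ∈ G.edges) : x ≠ y :=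
  fun hxy ↦ G.not_isDiag _ h (Sym2.mk_isDiag_iff.2 hxy)

lemma tight23_iff : Tight23 G ↔ IsLamanSparse G.edges ∧ #G.edges + 3 = 2 * #G.verts := by
  refine and_congr ⟨fun h X hX ↦ ?_, fun h V' E' ⟨_, hE', hV'⟩ hne ↦ ?_⟩ (by omega)
  · have hspan : G.edges ∩ (G.verts ∩ X).sym2 = G.edges ∩ X.sym2 := by
      rw [← sym2_inter_sym2, ← inter_assoc, inter_eq_left.2 G.edges_subset_sym2]
    have hsub : SubgraphPair G (G.verts ∩ X) (G.edges ∩ X.sym2) :=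
      ⟨inter_subset_left, inter_subset_left, fun e he ↦
        mem_sym2_iff.1 (mem_of_mem_inter_right (hspan ▸ he))⟩
    have hcard : #(G.verts ∩ X) ≤ #X := card_le_card inter_subset_right
    have := h _ _ hsub hX
    omega
  · have hspan : E' ⊆ G.edges ∩ V'.sym2 := fun e he ↦
      mem_inter.2 ⟨hE' he, mem_sym2_iff.2 (hV' e he)⟩
    have hcard := card_le_card hspan
    have := h V' (hne.mono hspan)
    omega

/-- The set of vertices of `G` adjacent to `v`. -/
def neighbors (G : FinGraph) (v : ℕ) : Finset ℕ := {w ∈ G.verts | s(v, w) ∈ G.edges}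

/-- The graph `G` with the vertex `v` and all edges at `v` removed, which undoes attaching `v` to
its neighbours. -/
def deleteVertex (G : FinGraph) (v : ℕ) : FinGraph where
  verts := G.verts.erase v
  edges := {e ∈ G.edges | v ∉ e}
  not_isDiag e he := G.not_isDiag e (mem_of_mem_filter e he)
  mem_verts e he w hw :=
    mem_erase.2 ⟨fun h ↦ (mem_filter.1 he).2 (h ▸ hw), G.mem_verts e (mem_of_mem_filter e he) w hw⟩

/-- The graph `G` with an edge added between two of its vertices, as needed to restore the edge
removed by an edge splitting. -/
def addEdge (G : FinGraph) (x y : ℕ) (hx : x ∈ G.verts) (hy : y ∈ G.verts) (hxy : x ≠ y) :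
    FinGraph where
  verts := G.verts
  edges := insert s(x, y) G.edges
  not_isDiag := forall_mem_insert _ _ _ |>.2 ⟨mt Sym2.mk_isDiag_iff.1 hxy, G.not_isDiag⟩
  mem_verts := forall_mem_insert _ _ _ |>.2 ⟨Sym2.ball.2 ⟨hx, hy⟩, G.mem_verts⟩

lemma verts_addEdge (hx : x ∈ G.verts) (hy : y ∈ G.verts) (hxy : x ≠ y) :
    (G.addEdge x y hx hy hxy).verts = G.verts :=
  rfl

lemma card_edges_addEdge (hx : x ∈ G.verts) (hy : y ∈ G.verts) (hxy : x ≠ y)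
    (h : s(x, y) ∉ G.edges) : #(G.addEdge x y hx hy hxy).edges = #G.edges + 1 :=
  card_insert_of_notMem h

lemma notMem_verts_deleteVertex : v ∉ (G.deleteVertex v).verts := notMem_erase v G.verts

lemma notMem_of_mem_edges_deleteVertex : ∀ e ∈ (G.deleteVertex v).edges, v ∉ e :=
  notMem_of_notMem_verts notMem_verts_deleteVertex

lemma insert_verts_deleteVertex (hv : v ∈ G.verts) :
    insert v (G.deleteVertex v).verts = G.verts :=
  insert_erase hv

lemma card_verts_deleteVertex_add_one (hv : v ∈ G.verts) :
    #(G.deleteVertex v).verts + 1 = #G.verts :=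
  card_erase_add_one hv

lemma neighbors_subset_verts_deleteVertex : G.neighbors v ⊆ (G.deleteVertex v).verts := by
  intro w hw
  obtain ⟨hw, hvw⟩ := mem_filter.1 hw
  exact mem_erase.2 ⟨(ne_of_mk_mem_edges hvw).symm, hw⟩

lemma notMem_neighbors_self : v ∉ G.neighbors v := fun h ↦
  notMem_verts_deleteVertex (neighbors_subset_verts_deleteVertex h)

lemma image_mk_neighbors (G : FinGraph) (v : ℕ) :
    (G.neighbors v).image (s(v, ·)) = {e ∈ G.edges | v ∈ e} := by
  ext e
  simp only [neighbors, mem_image, mem_filter]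
  constructor
  · rintro ⟨w, ⟨-, hw⟩, rfl⟩
    exact ⟨hw, Sym2.mem_mk_left v w⟩
  · rintro ⟨he, w, rfl⟩
    exact ⟨w, ⟨G.mem_verts _ he w (Sym2.mem_mk_right v w), he⟩, rfl⟩

lemma attachVertex_neighbors (G : FinGraph) (v : ℕ) :
    attachVertex v (G.neighbors v) (G.deleteVertex v).edges = G.edges := by
  rw [attachVertex, image_mk_neighbors]
  exact filter_union_filter_not_eq _ _

lemma card_neighbors_add_card_edges_deleteVertex (G : FinGraph) (v : ℕ) :
    #(G.neighbors v) + #(G.deleteVertex v).edges = #G.edges := by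
  rw [← card_attachVertex notMem_of_mem_edges_deleteVertex, attachVertex_neighbors]

lemma vertexAddition_deleteVertex (hv : v ∈ G.verts) (hN : #(G.neighbors v) = 2) :
    VertexAddition (G.deleteVertex v) G := by
  obtain ⟨a, b, hab, hN⟩ := card_eq_two.1 hN
  have hsub : {a, b} ⊆ (G.deleteVertex v).verts := hN ▸ neighbors_subset_verts_deleteVertex
  refine ⟨v, a, b, notMem_verts_deleteVertex, hsub (by simp), hsub (by simp), hab,
    (insert_verts_deleteVertex hv).symm, ?_⟩
  rw [← G.attachVertex_neighbors v, hN, attachVertex_insert, attachVertex_singleton]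

lemma edgeSplit_addEdge_deleteVertex (hv : v ∈ G.verts) (hN : #(G.neighbors v) = 3)
    (hx : x ∈ G.neighbors v) (hy : y ∈ G.neighbors v) (hxy : x ≠ y)
    (hnew : s(x, y) ∉ (G.deleteVertex v).edges) :
    EdgeSplit ((G.deleteVertex v).addEdge x y (neighbors_subset_verts_deleteVertex hx)
      (neighbors_subset_verts_deleteVertex hy) hxy) G := by
  obtain ⟨z, hz⟩ : ∃ z, G.neighbors v \ {x, y} = {z} := by
    rw [← card_eq_one, card_sdiff_of_subset (by simp [insert_subset_iff, hx, hy]), hN,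
      card_pair hxy]
  obtain ⟨hzN, hzx, hzy⟩ : z ∈ G.neighbors v ∧ z ≠ x ∧ z ≠ y := by
    simpa using hz.ge (mem_singleton_self z)
  have hNeq : G.neighbors v = {x, y, z} := by
    grind
  refine ⟨v, x, y, z, notMem_verts_deleteVertex, neighbors_subset_verts_deleteVertex hx,
    neighbors_subset_verts_deleteVertex hy, neighbors_subset_verts_deleteVertex hzN, hzx, hzy,
    mem_insert_self _ _, (insert_verts_deleteVertex hv).symm, ?_⟩
  rw [addEdge, erase_insert hnew, ← attachVertex_singleton (a := z), ← attachVertex_insert,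
    ← attachVertex_insert, ← hNeq, attachVertex_neighbors]

end FinGraph

section Henneberg

open FinGraph

variable {G H : FinGraph} {v : ℕ}

/-- One step of a Henneberg construction, leading from `H` to `G`. -/
def HennebergMove (H G : FinGraph) : Prop := VertexAddition H G ∨ EdgeSplit H G

lemma IsK2.tight23 (hG : IsK2 G) : Tight23 G := by
  obtain ⟨a, b, hab, hV, hE⟩ := hG
  refine tight23_iff.2 ⟨fun X hX ↦ ?_, by rw [hV, hE, card_pair hab, card_singleton]⟩
  rw [hE] at hX ⊢
  obtain ⟨e, he⟩ := hX
  obtain ⟨rfl, heX⟩ : e = s(a, b) ∧ e ∈ X.sym2 := by simpa using he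
  obtain ⟨ha, hb⟩ := mk_mem_sym2_iff.1 heX
  have hspan : #({s(a, b)} ∩ X.sym2) ≤ 1 := card_le_card inter_subset_left
  have hX2 : 1 < #X := one_lt_card.2 ⟨a, ha, b, hb, hab⟩
  omega

lemma VertexAddition.tight23 (h : VertexAddition H G) (hH : Tight23 H) : Tight23 G := by
  obtain ⟨v, a, b, hv, ha, hb, hab, hV, hE⟩ := h
  obtain ⟨hsparse, hcard⟩ := tight23_iff.1 hH
  have hvH := notMem_of_notMem_verts hv
  have hvN : v ∉ ({a, b} : Finset ℕ) := by grind
  have hEN : G.edges = attachVertex v {a, b} H.edges := by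
    rw [hE, attachVertex_insert, attachVertex_singleton]
  refine tight23_iff.2 ⟨hEN ▸ hsparse.attachVertex_of_card_le_two hvH hvN card_le_two, ?_⟩
  rw [hEN, hV, card_attachVertex hvH, card_pair hab, card_insert_of_notMem hv]
  omega

lemma EdgeSplit.tight23 (h : EdgeSplit H G) (hH : Tight23 H) : Tight23 G := by
  obtain ⟨v, x, y, z, hv, hx, hy, hz, hzx, hzy, hxy, hV, hE⟩ := h
  obtain ⟨hsparse, hcard⟩ := tight23_iff.1 hH
  rw [← insert_erase hxy] at hsparse
  have hvH : ∀ e ∈ H.edges.erase s(x, y), v ∉ e := fun e he ↦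
    notMem_of_notMem_verts hv e (mem_of_mem_erase he)
  have hvN : v ∉ ({x, y, z} : Finset ℕ) := by grind
  have hEN : G.edges = attachVertex v {x, y, z} (H.edges.erase s(x, y)) := by
    rw [hE, attachVertex_insert, attachVertex_insert, attachVertex_singleton]
  have hN : #{x, y, z} = 3 :=
    card_triple_eq_three_iff.2 ⟨ne_of_mk_mem_edges hxy, hzx.symm, hzy.symm⟩
  refine tight23_iff.2 ⟨hEN ▸ IsLamanSparse.attachVertex_of_insert (notMem_erase _ _) hsparse hvH
    hvN (by simp) (by simp) hN.le, ?_⟩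
  have herase := card_erase_add_one hxy
  rw [hEN, hV, card_attachVertex hvH, hN, card_insert_of_notMem hv]
  omega

lemma HennebergMove.tight23 (h : HennebergMove H G) (hH : Tight23 H) : Tight23 G :=
  h.elim (·.tight23 hH) (·.tight23 hH)

namespace Tight23

lemma isK2 (hG : Tight23 G) (hcard : #G.verts = 2) : IsK2 G := by
  obtain ⟨a, b, hab, hV⟩ := card_eq_two.1 hcard
  have hE : #G.edges = 1 := by
    have := (tight23_iff.1 hG).2
    omega
  refine ⟨a, b, hab, hV, eq_of_subset_of_card_le (fun e he ↦ ?_) (by simp [hE])⟩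
  have hdiag := G.not_isDiag e he
  have heV := G.edges_subset_sym2 he
  induction e with | _ c d
  rw [hV] at heV
  simp only [mk_mem_sym2_iff, mem_insert, mem_singleton, Sym2.mk_isDiag_iff, Sym2.eq_iff] at *
  grind

lemma isLamanSparse_deleteVertex (hG : Tight23 G) (v : ℕ) :
    IsLamanSparse (G.deleteVertex v).edges :=
  (tight23_iff.1 hG).1.mono (filter_subset _ _)

lemma exists_card_neighbors (hG : Tight23 G) (hcard : 3 ≤ #G.verts) :
    ∃ v ∈ G.verts, #(G.neighbors v) = 2 ∨ #(G.neighbors v) = 3 := by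
  have htight := (tight23_iff.1 hG).2
  obtain ⟨v, hv, hdeg⟩ : ∃ v ∈ G.verts, #{e ∈ G.edges | v ∈ e} < 4 :=
    exists_card_filter_mem_lt (by omega)
  rw [← image_mk_neighbors, card_image_mk] at hdeg
  have hverts := card_verts_deleteVertex_add_one hv
  have hedges := G.card_neighbors_add_card_edges_deleteVertex v
  have hdel : #(G.deleteVertex v).edges + 3 ≤ 2 * #(G.deleteVertex v).verts := by
    simpa only [inter_eq_left.2 (edges_subset_sym2 _)] using
      (hG.isLamanSparse_deleteVertex v).card_inter_sym2_le
        (X := (G.deleteVertex v).verts) (by omega)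
  exact ⟨v, hv, by omega⟩

lemma deleteVertex (hG : Tight23 G) (hv : v ∈ G.verts) (hN : #(G.neighbors v) = 2) :
    Tight23 (G.deleteVertex v) := by
  have htight := (tight23_iff.1 hG).2
  have hverts := card_verts_deleteVertex_add_one hv
  have hedges := G.card_neighbors_add_card_edges_deleteVertex v
  exact tight23_iff.2 ⟨hG.isLamanSparse_deleteVertex v, by omega⟩

lemma exists_edgeSplit (hG : Tight23 G) (hv : v ∈ G.verts) (hN : #(G.neighbors v) = 3) :
    ∃ H, Tight23 H ∧ #H.verts < #G.verts ∧ EdgeSplit H G := by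
  obtain ⟨hsparse, htight⟩ := tight23_iff.1 hG
  have hverts := card_verts_deleteVertex_add_one hv
  have hedges := G.card_neighbors_add_card_edges_deleteVertex v
  have hfree (X : Finset ℕ) (hX : G.neighbors v ⊆ X) :
      ¬ IsTightSet (G.deleteVertex v).edges X := by
    rw [← G.attachVertex_neighbors v,
      IsLamanSparse.attachVertex_iff notMem_of_mem_edges_deleteVertex notMem_neighbors_self]
      at hsparse
    have hbound := hsparse.2 X ((card_pos.1 (by omega)).mono hX)
    rw [inter_eq_left.2 hX, hN] at hbound
    unfold IsTightSet
    omega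
  obtain ⟨x, hx, y, hy, hxy, hnew, hinsert⟩ :=
    (hG.isLamanSparse_deleteVertex v).exists_insert hN hfree
  refine ⟨_, tight23_iff.2 ⟨hinsert, ?_⟩, ?_,
    edgeSplit_addEdge_deleteVertex hv hN hx hy hxy hnew⟩
  · rw [card_edges_addEdge _ _ _ hnew, verts_addEdge]
    omega
  · rw [verts_addEdge]
    omega

lemma exists_hennebergMove (hG : Tight23 G) (hcard : 3 ≤ #G.verts) :
    ∃ H, Tight23 H ∧ #H.verts < #G.verts ∧ HennebergMove H G := by
  obtain ⟨v, hv, hN | hN⟩ := hG.exists_card_neighbors hcard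
  · exact ⟨G.deleteVertex v, hG.deleteVertex hv hN, card_erase_lt_of_mem hv,
      .inl (vertexAddition_deleteVertex hv hN)⟩
  · obtain ⟨H, hH, hlt, hsplit⟩ := hG.exists_edgeSplit hv hN
    exact ⟨H, hH, hlt, .inr hsplit⟩

lemma exists_reflTransGen (hG : Tight23 G) :
    ∃ G₀, IsK2 G₀ ∧ Relation.ReflTransGen HennebergMove G₀ G := by
  induction hn : #G.verts using Nat.strong_induction_on generalizing G with
  | _ n ih =>
    have hcard : 2 ≤ #G.verts := by
      have := (tight23_iff.1 hG).2
      omega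
    rcases hcard.eq_or_lt with h2 | h3
    · exact ⟨G, hG.isK2 h2.symm, .refl⟩
    · obtain ⟨H, hH, hlt, hmove⟩ := hG.exists_hennebergMove h3
      obtain ⟨G₀, hG₀, hseq⟩ := ih _ (hn ▸ hlt) hH rfl
      exact ⟨G₀, hG₀, hseq.tail hmove⟩

end Tight23

lemma IsK2.tight23_of_reflTransGen {G₀ : FinGraph} (hG₀ : IsK2 G₀)
    (h : Relation.ReflTransGen HennebergMove G₀ G) : Tight23 G := by
  induction h with
  | refl => exact hG₀.tight23
  | tail _ hmove ih => exact hmove.tight23 ih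

end Henneberg

/-- **Henneberg–Laman.** A simple graph with at least two vertices is (2,3)-tight if and only
if it can be derived from `K₂` by a finite sequence of vertex additions and edge splits. -/
theorem statement_1 (G : FinGraph) (hV : 2 ≤ G.verts.card) :
    Tight23 G ↔
      ∃ G₀ : FinGraph, IsK2 G₀ ∧
        Relation.ReflTransGen (fun H H' => VertexAddition H H' ∨ EdgeSplit H H') G₀ G := by
  constructor
  · exact Tight23.exists_reflTransGen
  · rintro ⟨G₀, hG₀, hseq⟩
    exact hG₀.tight23_of_reflTransGen hseq
end

section
/- K_{6,6} is dependent in the 4-dimensional rigidity matroid: for every map p from the vertex set of the complete bipartite graph K_{6,6} to ℝ⁴, there exists a nonzero function ω from the edge set of K_{6,6} to ℝ such that for every vertex i, the sum over all edges ij incident to i of ω(ij)·(p(i)−p(j)) is the zero vector in ℝ⁴ (i.e., the rows of the rigidity matrix of (K_{6,6},p) in ℝ⁴ are linearly dependent). -/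
open Finset

/-!
If `a` and `b` are affine dependencies of the left vertices `p i` and of the right vertices `q j`,
then `∑ j, a i * b j * (p i - q j) = a i * ((∑ j, b j) * p i - ∑ j, b j * q j) = 0`, and likewise
at each `q j`, so `(i, j) ↦ a i * b j` is an equilibrium stress of the complete bipartite framework.
Nonzero dependencies exist as soon as each side has at least `d + 2` points in dimension `d`.
-/

section EquilibriumStress

variable {k V P ι κ : Type*} [AddCommGroup V] [AddTorsor V P] [Fintype ι] [Fintype κ]

/-- Equilibrium stresses of the framework that places the complete bipartite graph with parts `ι`
and `κ` at the points `p`, i.e. linear dependencies of the rows of its rigidity matrix. The edge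
joining `i : ι` to `j : κ` is encoded as the pair `(i, j)`. -/
structure IsBipartiteStress [Ring k] [Module k V] (p : ι ⊕ κ → P) (ω : ι × κ → k) : Prop where
  sum_left (i : ι) : ∑ j, ω (i, j) • (p (Sum.inl i) -ᵥ p (Sum.inr j)) = 0
  sum_right (j : κ) : ∑ i, ω (i, j) • (p (Sum.inr j) -ᵥ p (Sum.inl i)) = 0

theorem exists_ne_zero_forall_sum_smul_const_vsub_eq_zero [Ring k] [Module k V] {p : ι → P}
    (hp : ¬ AffineIndependent k p) : ∃ w : ι → k, w ≠ 0 ∧ ∀ x, ∑ i, w i • (x -ᵥ p i) = 0 := by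
  simp only [affineIndependent_iff_of_fintype, not_forall] at hp
  obtain ⟨w, hw_sum, hw_vsub, i, hi⟩ := hp
  refine ⟨w, Function.ne_iff.mpr ⟨i, hi⟩, fun x => ?_⟩
  rw [sum_smul_const_vsub_eq_neg_weightedVSub _ _ _ _ hw_sum, hw_vsub, neg_zero]

theorem isBipartiteStress_mul [CommRing k] [Module k V] {p : ι ⊕ κ → P} {a : ι → k} {b : κ → k}
    (ha : ∀ x, ∑ i, a i • (x -ᵥ p (Sum.inl i)) = 0)
    (hb : ∀ x, ∑ j, b j • (x -ᵥ p (Sum.inr j)) = 0) :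
    IsBipartiteStress p fun e => a e.1 * b e.2 where
  sum_left i := by simp only [mul_smul, ← smul_sum, hb, smul_zero]
  sum_right j := by simp only [mul_comm (a _), mul_smul, ← smul_sum, ha, smul_zero]

theorem exists_isBipartiteStress_of_not_affineIndependent [CommRing k] [NoZeroDivisors k]
    [Module k V] {p : ι ⊕ κ → P} (hι : ¬ AffineIndependent k (p ∘ Sum.inl))
    (hκ : ¬ AffineIndependent k (p ∘ Sum.inr)) :
    ∃ ω : ι × κ → k, ω ≠ 0 ∧ IsBipartiteStress p ω := by
  obtain ⟨a, ha_ne, ha⟩ := exists_ne_zero_forall_sum_smul_const_vsub_eq_zero hι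
  obtain ⟨b, hb_ne, hb⟩ := exists_ne_zero_forall_sum_smul_const_vsub_eq_zero hκ
  obtain ⟨i, hi⟩ := Function.ne_iff.mp ha_ne
  obtain ⟨j, hj⟩ := Function.ne_iff.mp hb_ne
  exact ⟨_, Function.ne_iff.mpr ⟨(i, j), mul_ne_zero hi hj⟩, isBipartiteStress_mul ha hb⟩

theorem not_affineIndependent_of_finrank_add_two_le_card [DivisionRing k] [Module k V]
    [FiniteDimensional k V] (p : ι → P) (h : Module.finrank k V + 2 ≤ Fintype.card ι) :
    ¬ AffineIndependent k p := by
  intro hp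
  have h_card := hp.card_le_finrank_succ
  have h_span := (vectorSpan k (Set.range p)).finrank_le
  lia

theorem statement_13_general [Field k] [Module k V] [FiniteDimensional k V] (p : ι ⊕ κ → P)
    (hι : Module.finrank k V + 2 ≤ Fintype.card ι) (hκ : Module.finrank k V + 2 ≤ Fintype.card κ) :
    ∃ ω : ι × κ → k, ω ≠ 0 ∧ IsBipartiteStress p ω :=
  exists_isBipartiteStress_of_not_affineIndependent
    (not_affineIndependent_of_finrank_add_two_le_card _ hι)
    (not_affineIndependent_of_finrank_add_two_le_card _ hκ)

end EquilibriumStress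

/-- **`K_{6,6}` is dependent in the 4-dimensional rigidity matroid.** For every placement `p`
of the vertices of the complete bipartite graph `K_{6,6}` (vertex set `Fin 6 ⊕ Fin 6`, edges
all pairs `(i,j)` of a left and a right vertex) in `ℝ⁴`, there is a nonzero assignment `ω` of
reals to the edges such that at every vertex the signed sum of the edge vectors vanishes;
i.e. the rows of the rigidity matrix of `(K_{6,6}, p)` in `ℝ⁴` are linearly dependent. -/
theorem statement_13 (p : Fin 6 ⊕ Fin 6 → Fin 4 → ℝ) :
    ∃ ω : Fin 6 × Fin 6 → ℝ, ω ≠ 0 ∧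
      (∀ i : Fin 6, ∑ j : Fin 6, ω (i, j) • (p (Sum.inl i) - p (Sum.inr j)) = 0) ∧
      (∀ j : Fin 6, ∑ i : Fin 6, ω (i, j) • (p (Sum.inr j) - p (Sum.inl i)) = 0) := by
  obtain ⟨ω, hω, hstress⟩ := statement_13_general (k := ℝ) p (by simp) (by simp)
  exact ⟨ω, hω, hstress.sum_left, hstress.sum_right⟩
end

section
/- Nash-Williams' forest decomposition theorem: let k be a positive integer. A finite simple graph G=(V,E) can be written as the union of k edge-disjoint forests (i.e., E can be partitioned into k sets, each of which induces an acyclic subgraph) if and only if every subgraph G'=(V',E') of G with V' nonempty satisfies |E'| ≤ k|V'| − k. -/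
open Finset

/-!
Necessity is counting: a forest spans at most `|U| - 1` edges on a nonempty vertex set `U`.

For sufficiency, suppose that `G` has no decomposition into `k` forests but `G - e₀` has one. If an
edge `xy` is left out of such a decomposition, then each of the `k` forests joins `x` to `y`, and
`xy` can be exchanged with any edge on the path that joins them. Let `H` consist of all edges that
successive exchanges can leave out. Every exchange moves edges of `H` only, so that already the
`H`-part of each *original* forest joins the ends of every edge of `H`. On the component `U` of `H`
that contains `e₀`, the `k` original forests thus have `k(|U| - 1)` edges altogether, and `e₀`
exceeds the bound. Infinite graphs follow by compactness.
-/

namespace NashWilliams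

open SimpleGraph

section Reachability

variable {V : Type*} {G H : SimpleGraph V}

lemma reachable_of_forall_adj_reachable (h : ∀ a b, G.Adj a b → H.Reachable a b) {a b : V}
    (hab : G.Reachable a b) : H.Reachable a b := by
  simp only [reachable_iff_reflTransGen] at h hab ⊢
  exact Relation.reflTransGen_closed h _ _ hab

lemma not_reachable_deleteEdges_of_mem_edges (hG : G.IsAcyclic) {x y : V} {p : G.Walk x y}
    (hp : p.IsPath) {f : Sym2 V} (hf : f ∈ p.edges) : ¬ (G.deleteEdges {f}).Reachable x y := by
  intro hxy
  obtain ⟨q, hq⟩ := hxy.exists_isPath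
  have hle : G.deleteEdges {f} ≤ G := deleteEdges_le _
  have hpq : p = q.mapLe hle :=
    congrArg Subtype.val ((hG.subsingleton_path x y).elim ⟨p, hp⟩ ⟨q.mapLe hle, hq.mapLe hle⟩)
  have hfq : f ∈ q.edges := by simpa [hpq] using hf
  simpa using q.edges_subset_edgeSet hfq

lemma connected_induce_supp_of_le (hle : G ≤ H) (h : ∀ a b, H.Adj a b → G.Reachable a b)
    (C : H.ConnectedComponent) : (G.induce C.supp).Connected := by
  induction C using ConnectedComponent.ind with | _ v
  have hsupp : (H.connectedComponentMk v).supp = (G.connectedComponentMk v).supp := by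
    ext u
    simp only [ConnectedComponent.mem_supp_iff, ConnectedComponent.eq]
    exact ⟨reachable_of_forall_adj_reachable h, Reachable.mono hle⟩
  rw [hsupp]
  exact (G.connectedComponentMk v).connected_toSimpleGraph

lemma finite_supp_of_finite_edgeSet [Finite G.edgeSet] (C : G.ConnectedComponent) :
    C.supp.Finite := by
  induction C using ConnectedComponent.ind with | _ v
  have hends : (⋃ e ∈ G.edgeSet, {u | u ∈ e}).Finite :=
    G.edgeSet.toFinite.biUnion fun e _ ↦ by
      classical exact e.toFinset.finite_toSet.subset fun u hu ↦ by simpa using hu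
  refine (hends.insert v).subset fun u hu ↦ ?_
  obtain rfl | huv := eq_or_ne u v
  · exact Set.mem_insert u _
  · obtain ⟨w, hw⟩ := mem_support_of_reachable huv (ConnectedComponent.exact hu)
    exact Set.mem_insert_of_mem v
      (Set.mem_biUnion (G.mem_edgeSet.mpr hw) (Sym2.mem_mk_left u w))

end Reachability

section EdgeCount

variable {V : Type*} {G H : SimpleGraph V} {U : Finset V}

lemma card_edgeSet_add_one_le_card_of_isAcyclic [Finite V] [Nonempty V] (hG : G.IsAcyclic) :
    Nat.card G.edgeSet + 1 ≤ Nat.card V := by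
  obtain ⟨T, hGT, -, hT⟩ := connected_top.exists_isTree_le_of_le_of_isAcyclic le_top hG
  rw [← (isTree_iff_connected_and_card.mp hT).2]
  exact Nat.add_le_add_right (Nat.card_mono (Set.toFinite _) (edgeSet_mono hGT)) 1

open scoped Classical in
/-- The set `E(G[U])` of edges of `G` with both ends in `U`, as edges of `G`. -/
noncomputable def edgesIn (G : SimpleGraph V) (U : Finset V) : Finset (Sym2 V) :=
  {e ∈ U.sym2 | e ∈ G.edgeSet}

lemma mem_edgesIn {e : Sym2 V} : e ∈ edgesIn G U ↔ (∀ v ∈ e, v ∈ U) ∧ e ∈ G.edgeSet := by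
  simp [edgesIn]

lemma edgesIn_mono (h : G ≤ H) : edgesIn G U ⊆ edgesIn H U := fun _ he ↦
  mem_edgesIn.mpr ((mem_edgesIn.mp he).imp_right fun h' ↦ edgeSet_mono h h')

lemma card_edgesIn_eq_card_edgeSet_induce (G : SimpleGraph V) (U : Finset V) :
    #(edgesIn G U) = Nat.card (G.induce (U : Set V)).edgeSet := by
  have himage : (edgesIn G U : Set (Sym2 V)) =
      Sym2.map Subtype.val '' (G.induce (U : Set V)).edgeSet := by
    ext e
    induction e with | _ a b
    simp only [SetLike.mem_coe, mem_edgesIn, Set.mem_image, Sym2.exists]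
    constructor
    · rintro ⟨hU, hab⟩
      exact ⟨⟨a, hU a (by simp)⟩, ⟨b, hU b (by simp)⟩, hab, rfl⟩
    · rintro ⟨a', b', hab, heq⟩
      rw [← heq]
      exact ⟨by simp, hab⟩
  rw [← Set.ncard_coe_finset, himage,
    Set.ncard_image_of_injective _ (Sym2.map.injective Subtype.val_injective),
    Nat.card_coe_set_eq]

lemma card_edgesIn_add_one_le_of_isAcyclic (hG : G.IsAcyclic) (hU : U.Nonempty) :
    #(edgesIn G U) + 1 ≤ #U := by
  have : Nonempty (U : Set V) := hU.to_subtype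
  simpa [card_edgesIn_eq_card_edgeSet_induce] using
    card_edgeSet_add_one_le_card_of_isAcyclic (hG.induce (U : Set V))

lemma card_le_card_edgesIn_add_one_of_connected (h : (G.induce (U : Set V)).Connected) :
    #U ≤ #(edgesIn G U) + 1 := by
  simpa [card_edgesIn_eq_card_edgeSet_induce] using h.card_vert_le_card_edgeSet_add_one

lemma card_edgesIn_deleteEdges_add_one {e : Sym2 V} (he : e ∈ edgesIn G U) :
    #(edgesIn (G.deleteEdges {e}) U) + 1 = #(edgesIn G U) := by
  classical
  have herase : edgesIn (G.deleteEdges {e}) U = (edgesIn G U).erase e := by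
    ext f
    simp only [mem_edgesIn, edgeSet_deleteEdges, Set.mem_sdiff, Set.mem_singleton_iff, mem_erase]
    tauto
  rw [herase, card_erase_add_one he]

end EdgeCount

section Sparse

variable {V : Type*} {G H : SimpleGraph V} {k : ℕ}

/-- `G` is `(k, k)`-sparse: every nonempty finite set `U` of vertices spans at most `k|U| - k`
edges. Stated as a sum to avoid truncated subtraction. -/
def IsSparse (k : ℕ) (G : SimpleGraph V) : Prop :=
  ∀ U : Finset V, U.Nonempty → #(edgesIn G U) + k ≤ k * #U

lemma IsSparse.anti (h : G ≤ H) (hH : IsSparse k H) : IsSparse k G := fun U hU ↦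
  (Nat.add_le_add_right (card_le_card (edgesIn_mono h)) k).trans (hH U hU)

lemma isSparse_iff_forall_subgraph : IsSparse k G ↔
    ∀ (V' : Finset V) (E' : Finset (Sym2 V)), ↑E' ⊆ G.edgeSet →
      (∀ e ∈ E', ∀ w ∈ e, w ∈ V') → V'.Nonempty → (E'.card : ℤ) ≤ k * V'.card - k := by
  constructor
  · intro hG V' E' hE' hV' hne
    have hle : #E' ≤ #(edgesIn G V') :=
      card_le_card fun e he ↦ mem_edgesIn.mpr ⟨hV' e he, hE' he⟩
    have hsparse := hG V' hne
    zify at hle hsparse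
    linarith
  · intro h U hU
    have hle := h U (edgesIn G U) (fun e he ↦ (mem_edgesIn.mp he).2)
      (fun e he ↦ (mem_edgesIn.mp he).1) hU
    zify
    linarith

end Sparse

section ForestColoring

variable {V κ : Type*} {G H : SimpleGraph V} {c : Sym2 V → κ}

/-- The graph formed by the edges of `G` that `c` colours `i`. The colouring is defined on all of
`Sym2 V`; its values off the edges of `G` are irrelevant. -/
def colorClass (G : SimpleGraph V) (c : Sym2 V → κ) (i : κ) : SimpleGraph V :=
  fromEdgeSet {e | e ∈ G.edgeSet ∧ c e = i}

lemma mem_edgeSet_colorClass {i : κ} {e : Sym2 V} :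
    e ∈ (colorClass G c i).edgeSet ↔ e ∈ G.edgeSet ∧ c e = i := by
  simp only [colorClass, edgeSet_fromEdgeSet, Set.mem_sdiff, Set.mem_ofPred_eq]
  exact and_iff_left_of_imp fun he ↦ G.not_isDiag_of_mem_edgeSet he.1

lemma colorClass_adj {i : κ} {a b : V} :
    (colorClass G c i).Adj a b ↔ G.Adj a b ∧ c s(a, b) = i := by
  rw [← mem_edgeSet, mem_edgeSet_colorClass, mem_edgeSet]

lemma colorClass_mono (h : G ≤ H) (i : κ) : colorClass G c i ≤ colorClass H c i :=
  fun _ _ hab ↦ colorClass_adj.mpr ((colorClass_adj.mp hab).imp_left fun h' ↦ h h')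

lemma sum_card_edgesIn_colorClass [Fintype κ] (G : SimpleGraph V) (c : Sym2 V → κ)
    (U : Finset V) : ∑ i, #(edgesIn (colorClass G c i) U) = #(edgesIn G U) := by
  classical
  rw [card_eq_sum_card_fiberwise (f := c) (t := univ) fun _ _ ↦ by simp]
  refine sum_congr rfl fun i _ ↦ congrArg card ?_
  ext e
  simp only [mem_edgesIn, mem_edgeSet_colorClass, mem_filter, and_assoc]

lemma card_mul_card_le_of_connected_colorClass [Fintype κ] {U : Finset V}
    (h : ∀ i, ((colorClass G c i).induce (U : Set V)).Connected) :
    Fintype.card κ * #U ≤ #(edgesIn G U) + Fintype.card κ := by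
  calc Fintype.card κ * #U = ∑ _i : κ, #U := by simp
    _ ≤ ∑ i, (#(edgesIn (colorClass G c i) U) + 1) :=
      sum_le_sum fun i _ ↦ card_le_card_edgesIn_add_one_of_connected (h i)
    _ = #(edgesIn G U) + Fintype.card κ := by
      simp [sum_add_distrib, sum_card_edgesIn_colorClass]

/-- The colouring `c` decomposes `G` into edge-disjoint forests, one for each colour. -/
def IsForestColoring (G : SimpleGraph V) (c : Sym2 V → κ) : Prop :=
  ∀ i, (colorClass G c i).IsAcyclic

lemma IsForestColoring.anti (h : G ≤ H) (hc : IsForestColoring H c) : IsForestColoring G c :=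
  fun i ↦ (hc i).anti (colorClass_mono h i)

lemma IsForestColoring.isSparse [Fintype κ] (hc : IsForestColoring G c) :
    IsSparse (Fintype.card κ) G := by
  intro U hU
  calc #(edgesIn G U) + Fintype.card κ = ∑ i, (#(edgesIn (colorClass G c i) U) + 1) := by
        simp [sum_add_distrib, sum_card_edgesIn_colorClass]
    _ ≤ ∑ _i : κ, #U := sum_le_sum fun i _ ↦ card_edgesIn_add_one_le_of_isAcyclic (hc i) hU
    _ = Fintype.card κ * #U := by simp

lemma IsForestColoring.update_of_not_reachable [DecidableEq V] {x y : V} {i : κ}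
    (hc : IsForestColoring (G.deleteEdges {s(x, y)}) c)
    (hxy : ¬ (colorClass (G.deleteEdges {s(x, y)}) c i).Reachable x y) :
    IsForestColoring G (Function.update c s(x, y) i) := by
  intro j
  obtain rfl | hji := eq_or_ne j i
  · refine ((hc j).sup_edge_of_not_reachable hxy).anti fun a b hab ↦ ?_
    rw [colorClass_adj] at hab
    rw [sup_adj, adj_edge, colorClass_adj, deleteEdges_adj, Set.mem_singleton_iff]
    obtain heq | hne := eq_or_ne s(a, b) s(x, y)
    · exact .inr ⟨heq.symm, hab.1.ne⟩
    · rw [Function.update_of_ne hne] at hab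
      exact .inl ⟨⟨hab.1, hne⟩, hab.2⟩
  · refine (hc j).anti fun a b hab ↦ ?_
    rw [colorClass_adj] at hab
    rw [colorClass_adj, deleteEdges_adj, Set.mem_singleton_iff]
    obtain heq | hne := eq_or_ne s(a, b) s(x, y)
    · rw [heq, Function.update_self] at hab
      exact absurd hab.2.symm hji
    · rw [Function.update_of_ne hne] at hab
      exact ⟨⟨hab.1, hne⟩, hab.2⟩

theorem exists_isForestColoring_of_forall_finset [Finite κ]
    (h : ∀ T : Finset (Sym2 V), ∃ c : Sym2 V → κ, IsForestColoring (fromEdgeSet ↑T ⊓ G) c) :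
    ∃ c : Sym2 V → κ, IsForestColoring G c := by
  classical
  choose g hg using h
  obtain ⟨c, hc⟩ := Finset.rado_selection g
  refine ⟨c, fun i v w hw ↦ ?_⟩
  obtain ⟨t, hwt, hct⟩ := hc w.edges.toFinset
  have hedges : ∀ e ∈ w.edges, e ∈ (colorClass (fromEdgeSet ↑t ⊓ G) (g t) i).edgeSet := by
    intro e he
    obtain ⟨heG, hei⟩ := mem_edgeSet_colorClass.mp (w.edges_subset_edgeSet he)
    have hew : e ∈ w.edges.toFinset := List.mem_toFinset.mpr he
    rw [mem_edgeSet_colorClass, edgeSet_inf, edgeSet_fromEdgeSet]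
    exact ⟨⟨⟨hwt hew, G.not_isDiag_of_mem_edgeSet heG⟩, heG⟩, (hct e hew).symm.trans hei⟩
  exact hg t i (w.transfer _ hedges) (hw.transfer hedges)

end ForestColoring

section Exchange

variable {V κ : Type*} {G : SimpleGraph V} {c c₀ : Sym2 V → κ} {e e₀ : Sym2 V}

/-- The colouring `c` decomposes `G` without its edge `e` into forests. This is the configuration
on which the exchange argument operates; the value `c e` is irrelevant. -/
structure IsForestColoringExcept (G : SimpleGraph V) (c : Sym2 V → κ) (e : Sym2 V) : Prop where
  mem_edgeSet : e ∈ G.edgeSet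
  isForestColoring : IsForestColoring (G.deleteEdges {e}) c

lemma IsForestColoringExcept.reachable_colorClass {x y : V}
    (h : IsForestColoringExcept G c s(x, y)) (hG : ∀ c : Sym2 V → κ, ¬ IsForestColoring G c)
    (i : κ) : (colorClass (G.deleteEdges {s(x, y)}) c i).Reachable x y := by
  classical
  exact not_not.mp fun hxy ↦ hG _ (h.isForestColoring.update_of_not_reachable hxy)

variable [DecidableEq V]

lemma IsForestColoringExcept.exchange {x y : V} (h : IsForestColoringExcept G c s(x, y)) {i : κ}
    {p : (colorClass (G.deleteEdges {s(x, y)}) c i).Walk x y} (hp : p.IsPath) {f : Sym2 V}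
    (hf : f ∈ p.edges) : IsForestColoringExcept G (Function.update c s(x, y) (c f)) f := by
  obtain ⟨hfG, rfl⟩ := mem_edgeSet_colorClass.mp (p.edges_subset_edgeSet hf)
  rw [edgeSet_deleteEdges] at hfG
  refine ⟨hfG.1, IsForestColoring.update_of_not_reachable ?_ fun hxy ↦ ?_⟩
  · exact h.isForestColoring.anti (deleteEdges_mono (deleteEdges_le _))
  · refine not_reachable_deleteEdges_of_mem_edges (h.isForestColoring _) hp hf
      (hxy.mono fun a b hab ↦ ?_)
    simp only [colorClass_adj, deleteEdges_adj] at hab ⊢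
    tauto

/-- `ExchangeReachable G c₀ e₀ c e` says that successive exchanges, each of which gives the
left-out edge `e` the colour of another edge `f` and leaves out `f` instead, lead from the
colouring `c₀` with `e₀` left out to the colouring `c` with `e` left out. -/
inductive ExchangeReachable (G : SimpleGraph V) (c₀ : Sym2 V → κ) (e₀ : Sym2 V) :
    (Sym2 V → κ) → Sym2 V → Prop
  | refl : ExchangeReachable G c₀ e₀ c₀ e₀
  | exchange {c : Sym2 V → κ} {e f : Sym2 V} (h : ExchangeReachable G c₀ e₀ c e)
      (hf : IsForestColoringExcept G (Function.update c e (c f)) f) :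
      ExchangeReachable G c₀ e₀ (Function.update c e (c f)) f

lemma ExchangeReachable.isForestColoringExcept (h : ExchangeReachable G c₀ e₀ c e)
    (h₀ : IsForestColoringExcept G c₀ e₀) : IsForestColoringExcept G c e := by
  cases h with
  | refl => exact h₀
  | exchange _ hf => exact hf

/-- The graph of all edges that are left out after some sequence of exchanges. -/
def exchangeGraph (G : SimpleGraph V) (c₀ : Sym2 V → κ) (e₀ : Sym2 V) : SimpleGraph V :=
  fromEdgeSet {e | ∃ c, ExchangeReachable G c₀ e₀ c e}

lemma exchangeGraph_adj {a b : V} : (exchangeGraph G c₀ e₀).Adj a b ↔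
    (∃ c, ExchangeReachable G c₀ e₀ c s(a, b)) ∧ a ≠ b :=
  fromEdgeSet_adj _

lemma exchangeGraph_le (h₀ : IsForestColoringExcept G c₀ e₀) : exchangeGraph G c₀ e₀ ≤ G := by
  intro a b hab
  obtain ⟨⟨c, hc⟩, -⟩ := exchangeGraph_adj.mp hab
  exact (hc.isForestColoringExcept h₀).mem_edgeSet

lemma ExchangeReachable.reachable_colorClass_inf {x y : V}
    (h : ExchangeReachable G c₀ e₀ c s(x, y)) (h₀ : IsForestColoringExcept G c₀ e₀)
    (hG : ∀ c : Sym2 V → κ, ¬ IsForestColoring G c) (i : κ) :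
    (colorClass (G.deleteEdges {s(x, y)}) c i ⊓ exchangeGraph G c₀ e₀).Reachable x y := by
  have hc := h.isForestColoringExcept h₀
  obtain ⟨p, hp⟩ := (hc.reachable_colorClass hG i).exists_isPath
  refine ⟨p.transfer _ fun f hf ↦ ?_⟩
  have hfp := p.edges_subset_edgeSet hf
  rw [edgeSet_inf, exchangeGraph, edgeSet_fromEdgeSet]
  exact ⟨hfp, ⟨_, h.exchange (hc.exchange hp hf)⟩, not_isDiag_of_mem_edgeSet _ hfp⟩

lemma ExchangeReachable.reachable_colorClass_inf_initial (h : ExchangeReachable G c₀ e₀ c e)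
    (h₀ : IsForestColoringExcept G c₀ e₀) (hG : ∀ c : Sym2 V → κ, ¬ IsForestColoring G c)
    (i : κ) {a b : V}
    (hab : (colorClass (G.deleteEdges {e}) c i ⊓ exchangeGraph G c₀ e₀).Reachable a b) :
    (colorClass (G.deleteEdges {e₀}) c₀ i ⊓ exchangeGraph G c₀ e₀).Reachable a b := by
  induction h generalizing a b with
  | refl => exact hab
  | @exchange c e f h _ ih =>
    refine ih (reachable_of_forall_adj_reachable (fun u v huv ↦ ?_) hab)
    obtain rfl | hne := eq_or_ne s(u, v) e
    · exact h.reachable_colorClass_inf h₀ hG i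
    · refine Adj.reachable ?_
      simp only [inf_adj, colorClass_adj, deleteEdges_adj, Set.mem_singleton_iff,
        Function.update_of_ne hne] at huv ⊢
      exact ⟨⟨⟨huv.1.1.1, hne⟩, huv.1.2⟩, huv.2⟩

lemma connected_induce_colorClass_supp (h₀ : IsForestColoringExcept G c₀ e₀)
    (hG : ∀ c : Sym2 V → κ, ¬ IsForestColoring G c)
    (C : (exchangeGraph G c₀ e₀).ConnectedComponent) (i : κ) :
    ((colorClass (G.deleteEdges {e₀}) c₀ i).induce C.supp).Connected := by
  refine (connected_induce_supp_of_le inf_le_right (fun a b hab ↦ ?_) C).mono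
    (comap_monotone _ inf_le_left)
  obtain ⟨⟨c, hc⟩, -⟩ := exchangeGraph_adj.mp hab
  exact hc.reachable_colorClass_inf_initial h₀ hG i (hc.reachable_colorClass_inf h₀ hG i)

end Exchange

section Sufficiency

variable {V κ : Type*} {G : SimpleGraph V}

lemma exists_finset_connected_colorClass [Finite G.edgeSet] {c₀ : Sym2 V → κ} {e₀ : Sym2 V}
    (h₀ : IsForestColoringExcept G c₀ e₀) (hG : ∀ c : Sym2 V → κ, ¬ IsForestColoring G c) :
    ∃ U : Finset V, e₀ ∈ edgesIn G U ∧
      ∀ i, ((colorClass (G.deleteEdges {e₀}) c₀ i).induce (U : Set V)).Connected := by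
  classical
  induction e₀ with | _ x y
  let H := exchangeGraph G c₀ s(x, y)
  let C := H.connectedComponentMk x
  have hxy : H.Adj x y := exchangeGraph_adj.mpr ⟨⟨c₀, .refl⟩, G.ne_of_adj h₀.mem_edgeSet⟩
  have : Finite H.edgeSet := Set.Finite.subset (Set.toFinite G.edgeSet)
    (edgeSet_mono (exchangeGraph_le h₀))
  have hC : C.supp.Finite := finite_supp_of_finite_edgeSet C
  refine ⟨hC.toFinset, mem_edgesIn.mpr ⟨?_, h₀.mem_edgeSet⟩, fun i ↦ ?_⟩
  · simpa [C, ConnectedComponent.eq] using hxy.symm.reachable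
  · rw [hC.coe_toFinset]
    exact connected_induce_colorClass_supp h₀ hG C i

variable [Fintype κ]

theorem IsSparse.exists_isForestColoring_of_deleteEdges [Finite G.edgeSet]
    (hG : IsSparse (Fintype.card κ) G) {e : Sym2 V}
    (h : ∃ c : Sym2 V → κ, IsForestColoring (G.deleteEdges {e}) c) :
    ∃ c : Sym2 V → κ, IsForestColoring G c := by
  classical
  by_cases he : e ∈ G.edgeSet
  · by_contra! hno
    obtain ⟨c, hc⟩ := h
    obtain ⟨U, heU, hconn⟩ := exists_finset_connected_colorClass ⟨he, hc⟩ hno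
    have hU : U.Nonempty := ⟨_, (mem_edgesIn.mp heU).1 _ e.out_fst_mem⟩
    have hupper : #(edgesIn G U) + Fintype.card κ ≤ Fintype.card κ * #U := hG U hU
    have hlower : Fintype.card κ * #U ≤ #(edgesIn (G.deleteEdges {e}) U) + Fintype.card κ :=
      card_mul_card_le_of_connected_colorClass hconn
    have hdelete : #(edgesIn (G.deleteEdges {e}) U) + 1 = #(edgesIn G U) :=
      card_edgesIn_deleteEdges_add_one heU
    lia
  · rwa [deleteEdges_eq_self.mpr (Set.disjoint_singleton_right.mpr he)] at h

theorem IsSparse.exists_isForestColoring_finset [Nonempty κ] (hG : IsSparse (Fintype.card κ) G)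
    (T : Finset (Sym2 V)) : ∃ c : Sym2 V → κ, IsForestColoring (fromEdgeSet ↑T ⊓ G) c := by
  classical
  induction T using Finset.induction_on with
  | empty => exact ⟨fun _ ↦ Classical.arbitrary κ, fun i ↦ by simp [colorClass]⟩
  | insert e T _ ih =>
    have : Finite (fromEdgeSet ↑(insert e T) ⊓ G).edgeSet := by
      rw [edgeSet_inf, edgeSet_fromEdgeSet]
      exact ((insert e T).finite_toSet.sdiff.inter_of_left _).to_subtype
    have hle : (fromEdgeSet ↑(insert e T) ⊓ G).deleteEdges {e} ≤ fromEdgeSet ↑T ⊓ G := by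
      intro a b hab
      simp only [coe_insert, deleteEdges_adj, inf_adj, fromEdgeSet_adj, Set.mem_insert_iff,
        Set.mem_singleton_iff] at hab ⊢
      tauto
    exact (hG.anti inf_le_right).exists_isForestColoring_of_deleteEdges
      (ih.imp fun c hc ↦ hc.anti hle)

theorem exists_isForestColoring_iff_isSparse [Nonempty κ] :
    (∃ c : Sym2 V → κ, IsForestColoring G c) ↔ IsSparse (Fintype.card κ) G :=
  ⟨fun ⟨_, hc⟩ ↦ hc.isSparse, fun hG ↦
    exists_isForestColoring_of_forall_finset hG.exists_isForestColoring_finset⟩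

end Sufficiency

end NashWilliams

theorem statement_16_general {V : Type*} (k : ℕ) (hk : 0 < k) (G : SimpleGraph V) :
    (∃ f : Sym2 V → Fin k, ∀ c : Fin k,
        SimpleGraph.IsAcyclic (SimpleGraph.fromEdgeSet {e | e ∈ G.edgeSet ∧ f e = c})) ↔
      (∀ (V' : Finset V) (E' : Finset (Sym2 V)), ↑E' ⊆ G.edgeSet →
        (∀ e ∈ E', ∀ w ∈ e, w ∈ V') → V'.Nonempty →
          (E'.card : ℤ) ≤ k * V'.card - k) := by
  have : Nonempty (Fin k) := ⟨⟨0, hk⟩⟩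
  have hiff := NashWilliams.exists_isForestColoring_iff_isSparse (κ := Fin k) (G := G)
  rw [Fintype.card_fin] at hiff
  exact hiff.trans NashWilliams.isSparse_iff_forall_subgraph

/-- **Nash-Williams' forest decomposition theorem.** Let `k` be a positive integer. A finite
simple graph `G` is the union of `k` edge-disjoint forests — its edge set can be partitioned
into `k` classes each of which induces an acyclic subgraph — if and only if every subgraph
`(V', E')` with `V'` nonempty satisfies `|E'| ≤ k|V'| − k`. -/
theorem statement_16 {V : Type} [Fintype V] (k : ℕ) (hk : 0 < k) (G : SimpleGraph V) :
    (∃ f : Sym2 V → Fin k, ∀ c : Fin k,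
        SimpleGraph.IsAcyclic (SimpleGraph.fromEdgeSet {e | e ∈ G.edgeSet ∧ f e = c})) ↔
      (∀ (V' : Finset V) (E' : Finset (Sym2 V)), ↑E' ⊆ G.edgeSet →
        (∀ e ∈ E', ∀ w ∈ e, w ∈ V') → V'.Nonempty →
          (E'.card : ℤ) ≤ k * V'.card - k) :=
  statement_16_general k hk G
end

section
/- Laman's theorem for the cylinder (Nixon–Owen–Power): let G=(V,E) be a graph with |V| ≥ 4 and let (G,p) be a generic framework on the cylinder Y = {(x,y,z) ∈ ℝ³ : x²+y²=1}. Then (G,p) is minimally infinitesimally rigid on Y (infinitesimally rigid on Y, and (G−e,p) not infinitesimally rigid on Y for every edge e) if and only if G is simple and (2,2)-tight. -/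
open Finset

/-- Dot product of two vectors in `ℝ^d`. -/
def dotv {d : ℕ} (x y : Fin d → ℝ) : ℝ := ∑ k, x k * y k

/-- The configuration `p` lies on the cylinder `x² + y² = 1` in `ℝ³`. -/
def OnCylinder {V : Type} (p : V → Fin 3 → ℝ) : Prop :=
  ∀ v : V, (p v 0) ^ 2 + (p v 1) ^ 2 = 1

/-- A framework on the cylinder is generic if the transcendence degree over `ℚ` of the field
generated by the `3|V|` coordinates equals `2|V|`: equivalently, some `2|V|` of the
coordinates are algebraically independent over `ℚ`, and no family of more than `2|V|`
coordinates is. -/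
def CylGeneric {V : Type} [Fintype V] (p : V → Fin 3 → ℝ) : Prop :=
  (∃ S : Finset (V × Fin 3), S.card = 2 * Fintype.card V ∧
      AlgebraicIndependent ℚ (fun i : {x // x ∈ S} => p i.1.1 i.1.2)) ∧
    ∀ T : Finset (V × Fin 3),
      AlgebraicIndependent ℚ (fun i : {x // x ∈ T} => p i.1.1 i.1.2) →
        T.card ≤ 2 * Fintype.card V

/-- An infinitesimal flex of `(G,p)` on the cylinder: each velocity vector is tangent to the
cylinder at the corresponding point, and the usual first-order edge-length equations hold. -/
def CylInfFlex {V : Type} (G : SimpleGraph V) (p u : V → Fin 3 → ℝ) : Prop :=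
  (∀ v : V, u v 0 * p v 0 + u v 1 * p v 1 = 0) ∧
    ∀ ⦃i j : V⦄, G.Adj i j → dotv (p i - p j) (u i - u j) = 0

/-- A trivial infinitesimal flex on the cylinder: a linear combination of the rotation about
the `z`-axis and the translation along the `z`-axis. -/
def CylTrivialFlex {V : Type} (p u : V → Fin 3 → ℝ) : Prop :=
  ∃ c₁ c₂ : ℝ, ∀ v : V, u v = c₁ • ![-(p v 1), p v 0, 0] + c₂ • ![0, 0, 1]

/-- `(G,p)` is infinitesimally rigid on the cylinder if every infinitesimal flex on the
cylinder is trivial. -/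
def CylInfRigid {V : Type} (G : SimpleGraph V) (p : V → Fin 3 → ℝ) : Prop :=
  ∀ u : V → Fin 3 → ℝ, CylInfFlex G p u → CylTrivialFlex p u

/-- A simple graph is (2,2)-tight: `|E| = 2|V| − 2` and every subgraph `(V',E')` with `V'`
nonempty satisfies `|E'| ≤ 2|V'| − 2`. -/
def Tight22 {V : Type} [Fintype V] (G : SimpleGraph V) : Prop :=
  (G.edgeSet.ncard : ℤ) = 2 * Fintype.card V - 2 ∧
    ∀ (V' : Finset V) (E' : Finset (Sym2 V)), ↑E' ⊆ G.edgeSet →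
      (∀ e ∈ E', ∀ w ∈ e, w ∈ V') → V'.Nonempty → (E'.card : ℤ) ≤ 2 * V'.card - 2

/-!
A tangent field on the cylinder is a map `u : V → ℝ²` of angular and vertical velocities. An edge
`ij` imposes one linear equation on the difference `u i - u j`, and the trivial flexes are the
constant maps. Rank–nullity for `G` and its subgraphs then shows that minimal rigidity forces
(2,2)-tightness.

Conversely, a generic configuration has algebraically independent parameters, and rigidity is the
nonvanishing of a Gram determinant that is polynomial in them, so a single rigid position suffices.
It is built by removing a vertex of degree 2 or 3 from a (2,2)-tight *multigraph*. A vertex of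
degree 3 is replaced by a virtual edge `w₁w₂` between two of its neighbours that lie in no common
tight set; the equation of this edge has free coefficients, so it may be parallel to an edge of the
graph and none of the exceptional moves of the simple-graph construction is needed. Deleting the
virtual edge frees a single flex `u₀`, with `u₀ w₁ ≠ u₀ w₂`, and the removed vertex is put back
where its three equations kill `u₀`.
-/

open scoped Matrix

section AngularCoordinates

/-- The linear form of an edge `pq` on the cylinder in the coordinates (angular velocity, vertical
velocity): the edge constrains only the difference of the velocities of its ends, by this form. -/
def edgeDir (p q : Fin 3 → ℝ) : Fin 2 → ℝ :=
  ![q 0 * p 1 - p 0 * q 1, p 2 - q 2]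

/-- The vector field tangent to the cylinder at the points of `p` whose value at `v` has angular
velocity `u v 0` and vertical velocity `u v 1`. -/
def tangentField {V : Type*} (p : V → Fin 3 → ℝ) (u : V → Fin 2 → ℝ) (v : V) : Fin 3 → ℝ :=
  u v 0 • ![-(p v 1), p v 0, 0] + u v 1 • ![0, 0, 1]

/-- Rigidity of a graph whose edge `ij` imposes the single linear equation
`d i j ⬝ᵥ (u i - u j) = 0` on planar velocities `u`: all solutions are constant. -/
def DirRigid {V : Type*} (G : SimpleGraph V) (d : V → V → Fin 2 → ℝ) : Prop :=
  ∀ u : V → Fin 2 → ℝ, (∀ ⦃i j⦄, G.Adj i j → d i j ⬝ᵥ (u i - u j) = 0) → ∀ v w, u v = u w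

lemma edgeDir_swap (p q : Fin 3 → ℝ) : edgeDir q p = -edgeDir p q := by
  ext k
  fin_cases k <;> simp [edgeDir]

lemma exists_eq_mul_tangent {a b s t : ℝ} (hab : a ^ 2 + b ^ 2 = 1) (h : s * a + t * b = 0) :
    ∃ ω, s = ω * -b ∧ t = ω * a :=
  ⟨t * a - s * b, by linear_combination (-s) * hab + a * h, by
    linear_combination (-t) * hab + b * h⟩

lemma dotv_tangentField {V : Type*} (p : V → Fin 3 → ℝ) (u : V → Fin 2 → ℝ) (i j : V) :
    dotv (p i - p j) (tangentField p u i - tangentField p u j) =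
      edgeDir (p i) (p j) ⬝ᵥ (u i - u j) := by
  rw [Matrix.vec2_dotProduct]
  simp only [dotv, tangentField, edgeDir, Fin.sum_univ_three, Pi.sub_apply, Pi.add_apply,
    Pi.smul_apply, smul_eq_mul, Matrix.cons_val]
  ring

variable {V : Type} {G : SimpleGraph V} {p : V → Fin 3 → ℝ}

lemma cylInfFlex_tangentField_iff {u : V → Fin 2 → ℝ} :
    CylInfFlex G p (tangentField p u) ↔
      ∀ ⦃i j⦄, G.Adj i j → edgeDir (p i) (p j) ⬝ᵥ (u i - u j) = 0 := by
  simp only [CylInfFlex, dotv_tangentField, and_iff_right_iff_imp]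
  intro _ v
  simp only [tangentField, Pi.add_apply, Pi.smul_apply, smul_eq_mul, Matrix.cons_val]
  ring

lemma CylInfFlex.exists_eq_tangentField (hcyl : OnCylinder p) {u : V → Fin 3 → ℝ}
    (hu : CylInfFlex G p u) : ∃ u', u = tangentField p u' := by
  choose ω hω₀ hω₁ using fun v => exists_eq_mul_tangent (hcyl v) (hu.1 v)
  refine ⟨fun v => ![ω v, u v 2], ?_⟩
  ext v k
  fin_cases k <;> simp [tangentField, hω₀, hω₁]

lemma OnCylinder.tangentField_injective (hcyl : OnCylinder p) :
    Function.Injective (tangentField p) := by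
  intro u u' h
  ext v k
  have h₀ : u v 0 * p v 1 = u' v 0 * p v 1 := by simpa [tangentField] using congr_fun₂ h v 0
  have h₁ : u v 0 * p v 0 = u' v 0 * p v 0 := by simpa [tangentField] using congr_fun₂ h v 1
  have h₂ : u v 1 = u' v 1 := by simpa [tangentField] using congr_fun₂ h v 2
  fin_cases k
  · change u v 0 = u' v 0
    linear_combination p v 0 * h₁ + p v 1 * h₀ + (u' v 0 - u v 0) * hcyl v
  · exact h₂

lemma cylTrivialFlex_iff {u : V → Fin 3 → ℝ} :
    CylTrivialFlex p u ↔ ∃ c, u = tangentField p fun _ => c := by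
  constructor
  · rintro ⟨c₁, c₂, h⟩
    exact ⟨![c₁, c₂], funext h⟩
  · rintro ⟨c, rfl⟩
    exact ⟨c 0, c 1, fun _ => rfl⟩

lemma cylTrivialFlex_tangentField_iff [Nonempty V] (hcyl : OnCylinder p) {u : V → Fin 2 → ℝ} :
    CylTrivialFlex p (tangentField p u) ↔ ∀ v w, u v = u w := by
  simp only [cylTrivialFlex_iff, hcyl.tangentField_injective.eq_iff]
  constructor
  · rintro ⟨c, rfl⟩
    exact fun _ _ => rfl
  · intro h
    exact ⟨u (Classical.arbitrary V), funext fun v => h v _⟩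

theorem cylInfRigid_iff_dirRigid [Nonempty V] (hcyl : OnCylinder p) :
    CylInfRigid G p ↔ DirRigid G fun i j => edgeDir (p i) (p j) := by
  constructor
  · intro h u hu
    exact (cylTrivialFlex_tangentField_iff hcyl).1 (h _ (cylInfFlex_tangentField_iff.2 hu))
  · intro h u hu
    obtain ⟨u, rfl⟩ := hu.exists_eq_tangentField hcyl
    exact (cylTrivialFlex_tangentField_iff hcyl).2 (h u (cylInfFlex_tangentField_iff.1 hu))

end AngularCoordinates

section Counting

/-- The left-hand side of the equation of an edge, as a linear form on the planar velocities. -/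
def edgeForm {V : Type*} (d : V → V → Fin 2 → ℝ) (hd : ∀ i j, d j i = -d i j) :
    Sym2 V → Module.Dual ℝ (V → Fin 2 → ℝ) :=
  Sym2.lift
    ⟨fun i j =>
      { toFun u := d i j ⬝ᵥ (u i - u j)
        map_add' u u' := by rw [← dotProduct_add, Pi.add_apply, Pi.add_apply, add_sub_add_comm]
        map_smul' c u := by
          rw [Pi.smul_apply, Pi.smul_apply, ← smul_sub, dotProduct_smul, RingHom.id_apply] },
      fun i j => LinearMap.ext fun u => by
        change d i j ⬝ᵥ (u i - u j) = d j i ⬝ᵥ (u j - u i)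
        rw [hd i j, neg_dotProduct, ← dotProduct_neg, neg_sub]⟩

@[simp]
lemma edgeForm_mk {V : Type*} {d : V → V → Fin 2 → ℝ} (hd : ∀ i j, d j i = -d i j) (i j : V)
    (u : V → Fin 2 → ℝ) : edgeForm d hd s(i, j) u = d i j ⬝ᵥ (u i - u j) :=
  rfl

variable {V : Type} {G : SimpleGraph V} {d : V → V → Fin 2 → ℝ}

lemma dirRigid_iff_edgeForm (hd : ∀ i j, d j i = -d i j) :
    DirRigid G d ↔ ∀ u, (∀ e ∈ G.edgeSet, edgeForm d hd e u = 0) → ∀ v w, u v = u w := by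
  simp [DirRigid, Sym2.forall]

lemma finrank_planar_velocities (ι : Type*) [Fintype ι] :
    Module.finrank ℝ (ι → Fin 2 → ℝ) = 2 * Fintype.card ι := by
  simp [Module.finrank_pi_fintype, mul_comm]

lemma DirRigid.two_mul_card_le [Fintype V] (hd : ∀ i j, d j i = -d i j) (h : DirRigid G d) :
    2 * Fintype.card V ≤ G.edgeSet.ncard + 2 := by
  classical
  rcases isEmpty_or_nonempty V with _ | ⟨⟨o⟩⟩
  · simp
  let L : (V → Fin 2 → ℝ) →ₗ[ℝ] G.edgeSet → ℝ := LinearMap.pi fun e => edgeForm d hd e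
  have h_ker : LinearMap.ker (L.prod (LinearMap.proj o)) = ⊥ := by
    refine LinearMap.ker_eq_bot'.2 fun u hu => ?_
    obtain ⟨hL, ho⟩ := Prod.mk_inj.1 hu
    ext v : 1
    rw [(dirRigid_iff_edgeForm hd).1 h u (fun e he => congr_fun hL ⟨e, he⟩) v o]
    exact ho
  have h_dim := LinearMap.finrank_le_finrank_of_injective (LinearMap.ker_eq_bot.1 h_ker)
  simpa [finrank_planar_velocities, ← Nat.card_coe_set_eq] using h_dim

lemma exists_edgeForm_eq_single (hd : ∀ i j, d j i = -d i j) (h : DirRigid G d) {e : Sym2 V}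
    (he : ¬ DirRigid (G.deleteEdges {e}) d) :
    ∃ u, edgeForm d hd e u = 1 ∧ ∀ e' ∈ G.edgeSet, e' ≠ e → edgeForm d hd e' u = 0 := by
  rw [dirRigid_iff_edgeForm hd] at h he
  push Not at he
  obtain ⟨u, hu, v, w, hvw⟩ := he
  have hu' : ∀ e' ∈ G.edgeSet, e' ≠ e → edgeForm d hd e' u = 0 := fun e' he' hne =>
    hu e' (by simp [he', hne])
  have hue : edgeForm d hd e u ≠ 0 := by
    refine fun h0 => hvw (h u (fun e' he' => ?_) v w)
    obtain rfl | hne := eq_or_ne e' e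
    exacts [h0, hu' e' he' hne]
  refine ⟨(edgeForm d hd e u)⁻¹ • u, by simp [hue], fun e' he' hne => ?_⟩
  simp [hu' e' he' hne]

lemma surjective_edgeForms (hd : ∀ i j, d j i = -d i j) (h : DirRigid G d)
    (hmin : ∀ e ∈ G.edgeSet, ¬ DirRigid (G.deleteEdges {e}) d) {E : Finset (Sym2 V)}
    (hE : ↑E ⊆ G.edgeSet) :
    Function.Surjective (LinearMap.pi fun e : E => edgeForm d hd e) := by
  classical
  choose! u hu₁ hu₀ using fun e (he : e ∈ G.edgeSet) => exists_edgeForm_eq_single hd h (hmin e he)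
  intro c
  refine ⟨∑ e : E, c e • u e, ?_⟩
  ext e
  simp only [LinearMap.pi_apply, map_sum, map_smul, smul_eq_mul]
  rw [Finset.sum_eq_single e, hu₁ e (hE e.2), mul_one]
  · intro e' _ hne
    rw [hu₀ e' (hE e'.2) e (hE e.2) (Subtype.coe_injective.ne hne.symm), mul_zero]
  · simp

/-- The contraction of a finite set of vertices to the single point `none`. -/
noncomputable def contract {V : Type*} (W : Finset V) (v : V) : Option {v // v ∉ W} :=
  open Classical in if h : v ∈ W then none else some ⟨v, h⟩

lemma contract_surjective {W : Finset V} (hW : W.Nonempty) :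
    Function.Surjective (contract W) := by
  rintro (_ | ⟨v, hv⟩)
  · exact hW.imp fun v hv => dif_pos hv
  · exact ⟨v, dif_neg hv⟩

lemma edgeForm_funLeft_contract (hd : ∀ i j, d j i = -d i j) {W : Finset V} {e : Sym2 V}
    (he : ∀ v ∈ e, v ∈ W) (u : Option {v // v ∉ W} → Fin 2 → ℝ) :
    edgeForm d hd e (LinearMap.funLeft ℝ (Fin 2 → ℝ) (contract W) u) = 0 := by
  induction e with | _ i j
  simp [LinearMap.funLeft_apply, contract, he]

lemma card_add_two_le_of_minimal [Finite V] (hd : ∀ i j, d j i = -d i j) (h : DirRigid G d)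
    (hmin : ∀ e ∈ G.edgeSet, ¬ DirRigid (G.deleteEdges {e}) d) {W : Finset V}
    {E : Finset (Sym2 V)} (hE : ↑E ⊆ G.edgeSet) (hEW : ∀ e ∈ E, ∀ v ∈ e, v ∈ W)
    (hW : W.Nonempty) : #E + 2 ≤ 2 * #W := by
  classical
  cases nonempty_fintype V
  let L : (V → Fin 2 → ℝ) →ₗ[ℝ] E → ℝ := LinearMap.pi fun e => edgeForm d hd e
  let P := LinearMap.funLeft ℝ (Fin 2 → ℝ) (contract W)
  have h_range : Module.finrank ℝ (LinearMap.range L) = #E := by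
    rw [LinearMap.range_eq_top.2 (surjective_edgeForms hd h hmin hE), finrank_top]
    simp
  have hP_ker : LinearMap.range P ≤ LinearMap.ker L := by
    rintro _ ⟨u, rfl⟩
    ext e
    exact edgeForm_funLeft_contract hd (hEW e e.2) u
  have hP_dim : Module.finrank ℝ (LinearMap.range P) = 2 * (Fintype.card V - #W + 1) := by
    rw [LinearMap.finrank_range_of_inj
      (LinearMap.funLeft_injective_of_surjective _ _ _ (contract_surjective hW))]
    simp [finrank_planar_velocities]
  have h_le := Submodule.finrank_mono hP_ker
  have h_rank_nullity := LinearMap.finrank_range_add_finrank_ker L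
  have h_dim := finrank_planar_velocities V
  have := Finset.card_le_univ W
  omega

theorem tight22_of_minimal_dirRigid [Fintype V] [Nonempty V] (hd : ∀ i j, d j i = -d i j)
    (h : DirRigid G d) (hmin : ∀ e ∈ G.edgeSet, ¬ DirRigid (G.deleteEdges {e}) d) : Tight22 G := by
  classical
  have h_count {W : Finset V} {E : Finset (Sym2 V)} (hE : ↑E ⊆ G.edgeSet)
      (hEW : ∀ e ∈ E, ∀ v ∈ e, v ∈ W) (hW : W.Nonempty) :=
    card_add_two_le_of_minimal hd h hmin hE hEW hW
  refine ⟨?_, fun W E hE hEW hW => ?_⟩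
  · have h_lower := h.two_mul_card_le hd
    have h_upper := h_count (W := univ) (E := G.edgeFinset) (by simp) (by simp) univ_nonempty
    rw [Finset.card_univ, ← Set.ncard_coe_finset, SimpleGraph.coe_edgeFinset] at h_upper
    omega
  · have := h_count hE hEW hW
    omega

lemma Tight22.not_dirRigid_deleteEdges [Fintype V] (hG : Tight22 G) (hd : ∀ i j, d j i = -d i j)
    {e : Sym2 V} (he : e ∈ G.edgeSet) : ¬ DirRigid (G.deleteEdges {e}) d := by
  intro h
  have h_card := h.two_mul_card_le hd
  rw [SimpleGraph.edgeSet_deleteEdges, Set.ncard_sdiff_singleton_of_mem he] at h_card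
  have h_pos := (Set.ncard_pos (Set.toFinite _)).2 ⟨e, he⟩
  have := hG.1
  omega

end Counting

section Parametrization

/-- The rational parametrization of the cylinder, without the vertical line at angle `π`: `x 0` is
the tangent of half the angle, `x 1` the height. -/
noncomputable def cylPoint (x : Fin 2 → ℝ) : Fin 3 → ℝ :=
  ![(1 - x 0 ^ 2) / (1 + x 0 ^ 2), 2 * x 0 / (1 + x 0 ^ 2), x 1]

/-- The linear form `edgeDir` of an edge in the parameters of its ends, with denominators
cleared. -/
def paramDir {R : Type*} [CommRing R] (x y : Fin 2 → R) : Fin 2 → R :=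
  ![2 * (x 0 - y 0) * (1 + x 0 * y 0), (x 1 - y 1) * (1 + x 0 ^ 2) * (1 + y 0 ^ 2)]

lemma map_paramDir {R S : Type*} [CommRing R] [CommRing S] (f : R →+* S) (x y : Fin 2 → R)
    (k : Fin 2) : f (paramDir x y k) = paramDir (f ∘ x) (f ∘ y) k := by
  fin_cases k <;> simp [paramDir, map_ofNat]

lemma paramDir_eq_smul_edgeDir (x y : Fin 2 → ℝ) :
    paramDir x y = ((1 + x 0 ^ 2) * (1 + y 0 ^ 2)) • edgeDir (cylPoint x) (cylPoint y) := by
  have hx : 1 + x 0 ^ 2 ≠ 0 := by positivity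
  have hy : 1 + y 0 ^ 2 ≠ 0 := by positivity
  ext k
  fin_cases k
  · change 2 * (x 0 - y 0) * (1 + x 0 * y 0) = (1 + x 0 ^ 2) * (1 + y 0 ^ 2) *
      ((1 - y 0 ^ 2) / (1 + y 0 ^ 2) * (2 * x 0 / (1 + x 0 ^ 2)) -
        (1 - x 0 ^ 2) / (1 + x 0 ^ 2) * (2 * y 0 / (1 + y 0 ^ 2)))
    field_simp
    ring
  · change (x 1 - y 1) * (1 + x 0 ^ 2) * (1 + y 0 ^ 2) =
      (1 + x 0 ^ 2) * (1 + y 0 ^ 2) * (x 1 - y 1)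
    ring

lemma paramDir_swap {R : Type*} [CommRing R] (x y : Fin 2 → R) :
    paramDir y x = -paramDir x y := by
  ext k
  fin_cases k <;> simp only [paramDir, Pi.neg_apply, Fin.zero_eta, Fin.mk_one, Matrix.cons_val] <;>
    ring

lemma paramDir_zero_ne_zero {x y : Fin 2 → ℝ} (hx : 0 < x 0) (hy : 0 < y 0) (hxy : x 0 ≠ y 0) :
    paramDir x y 0 ≠ 0 := by
  have : 1 + x 0 * y 0 ≠ 0 := by positivity
  simpa [paramDir, sub_ne_zero.2 hxy]

lemma dirRigid_smul_iff {V : Type*} {G : SimpleGraph V} {c : V → V → ℝ} {d : V → V → Fin 2 → ℝ}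
    (hc : ∀ i j, c i j ≠ 0) : DirRigid G (fun i j => c i j • d i j) ↔ DirRigid G d := by
  simp only [DirRigid, smul_dotProduct, smul_eq_zero, hc, false_or]

lemma dirRigid_cylPoint_iff {V : Type*} {G : SimpleGraph V} (x : V → Fin 2 → ℝ) :
    DirRigid G (fun i j => edgeDir (cylPoint (x i)) (cylPoint (x j))) ↔
      DirRigid G fun i j => paramDir (x i) (x j) := by
  simp only [paramDir_eq_smul_edgeDir]
  exact (dirRigid_smul_iff fun i j => by positivity).symm

end Parametrization

section ThreeEdges

/-- The matrix of the equations `paramDir x qᵢ ⬝ᵥ (A - c • uᵢ) = 0`, `i = 1, 2, 3`, in the unknowns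
`A 0`, `A 1`, `c`. -/
def joinMatrix (q₁ q₂ q₃ u₁ u₂ u₃ x : Fin 2 → ℝ) : Matrix (Fin 3) (Fin 3) ℝ :=
  !![paramDir x q₁ 0, paramDir x q₁ 1, -(paramDir x q₁ ⬝ᵥ u₁);
    paramDir x q₂ 0, paramDir x q₂ 1, -(paramDir x q₂ ⬝ᵥ u₂);
    paramDir x q₃ 0, paramDir x q₃ 1, -(paramDir x q₃ ⬝ᵥ u₃)]

lemma det_joinMatrix_rotate (q₁ q₂ q₃ u₁ u₂ u₃ x : Fin 2 → ℝ) :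
    (joinMatrix q₂ q₃ q₁ u₂ u₃ u₁ x).det = (joinMatrix q₁ q₂ q₃ u₁ u₂ u₃ x).det := by
  simp only [joinMatrix, Matrix.det_fin_three, Matrix.of_apply, Matrix.cons_val]
  ring

lemma eq_zero_of_joinMatrix_det_ne_zero {q₁ q₂ q₃ u₁ u₂ u₃ x : Fin 2 → ℝ}
    (h_det : (joinMatrix q₁ q₂ q₃ u₁ u₂ u₃ x).det ≠ 0) {A : Fin 2 → ℝ} {c : ℝ}
    (h₁ : paramDir x q₁ ⬝ᵥ (A - c • u₁) = 0) (h₂ : paramDir x q₂ ⬝ᵥ (A - c • u₂) = 0)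
    (h₃ : paramDir x q₃ ⬝ᵥ (A - c • u₃) = 0) : A = 0 ∧ c = 0 := by
  have h := Matrix.eq_zero_of_mulVec_eq_zero h_det (v := ![A 0, A 1, c]) <| by
    simp only [Matrix.vec2_dotProduct, Pi.sub_apply, Pi.smul_apply, smul_eq_mul] at h₁ h₂ h₃
    ext i
    fin_cases i <;> simp only [joinMatrix, Matrix.mulVec, Matrix.vec2_dotProduct,
      Matrix.vec3_dotProduct, Matrix.of_apply, Matrix.cons_val, Pi.zero_apply, Fin.zero_eta,
      Fin.mk_one, Fin.reduceFinMk] <;> linarith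
  refine ⟨?_, congr_fun h 2⟩
  ext k
  fin_cases k
  exacts [congr_fun h 0, congr_fun h 1]

/- At the angle of `q₁` the first equation loses its angular part, and the determinant is a multiple
of a function that is affine in the height. -/
lemma det_joinMatrix_same_angle (q₁ q₂ q₃ u₁ u₂ u₃ : Fin 2 → ℝ) (h : ℝ) :
    (joinMatrix q₁ q₂ q₃ u₁ u₂ u₃ ![q₁ 0, h]).det =
      paramDir ![q₁ 0, h] q₁ 1 * (paramDir q₁ q₂ 0 * paramDir q₁ q₃ 0 * (u₃ 0 - u₂ 0) +
        (1 + q₁ 0 ^ 2) * ((h - q₃ 1) * (1 + q₃ 0 ^ 2) * paramDir q₁ q₂ 0 * (u₃ 1 - u₁ 1) -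
          (h - q₂ 1) * (1 + q₂ 0 ^ 2) * paramDir q₁ q₃ 0 * (u₂ 1 - u₁ 1))) := by
  simp only [joinMatrix, Matrix.det_fin_three, paramDir, Matrix.vec2_dotProduct, Matrix.of_apply,
    Matrix.cons_val]
  ring

lemma eq_of_det_joinMatrix_same_angle_eq_zero {q₁ q₂ q₃ u₁ u₂ u₃ : Fin 2 → ℝ}
    (h_det : ∀ h, (joinMatrix q₁ q₂ q₃ u₁ u₂ u₃ ![q₁ 0, h]).det = 0) :
    (1 + q₃ 0 ^ 2) * paramDir q₁ q₂ 0 * (u₃ 1 - u₁ 1) =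
        (1 + q₂ 0 ^ 2) * paramDir q₁ q₃ 0 * (u₂ 1 - u₁ 1) ∧
      paramDir q₁ q₂ 0 * paramDir q₁ q₃ 0 * (u₃ 0 - u₂ 0) =
        (1 + q₁ 0 ^ 2) * (q₃ 1 - q₂ 1) * ((1 + q₃ 0 ^ 2) * paramDir q₁ q₂ 0 * (u₃ 1 - u₁ 1)) := by
  have h_affine (h : ℝ) (hne : h ≠ q₁ 1) :=
    (mul_eq_zero.1 ((det_joinMatrix_same_angle ..).symm.trans (h_det h))).resolve_left <| by
      have : 1 + q₁ 0 ^ 2 ≠ 0 := by positivity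
      simpa [paramDir, sub_eq_zero] using ⟨hne, this⟩
  have h_at₁ := h_affine (q₁ 1 + 1) (by simp)
  have h_at₂ := h_affine (q₁ 1 + 2) (by simp)
  have h_slope : (1 + q₃ 0 ^ 2) * paramDir q₁ q₂ 0 * (u₃ 1 - u₁ 1) =
      (1 + q₂ 0 ^ 2) * paramDir q₁ q₃ 0 * (u₂ 1 - u₁ 1) := by
    have : 1 + q₁ 0 ^ 2 ≠ 0 := by positivity
    exact mul_left_cancel₀ this (by linear_combination h_at₂ - h_at₁)
  exact ⟨h_slope, by
    linear_combination h_at₁ - (1 + q₁ 0 ^ 2) * (q₁ 1 + 1 - q₂ 1) * h_slope⟩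

/- In terms of the angles `θᵢ` this is
`∑ sin (θᵢ - θⱼ) = -4 ∏ sin ((θᵢ - θⱼ) / 2)`, the sum and product being cyclic. -/
lemma cyclic_sum_paramDir_zero (q₁ q₂ q₃ : Fin 2 → ℝ) :
    paramDir q₁ q₂ 0 * (1 + q₃ 0 ^ 2) + paramDir q₂ q₃ 0 * (1 + q₁ 0 ^ 2) +
        paramDir q₃ q₁ 0 * (1 + q₂ 0 ^ 2) =
      -4 * ((q₁ 0 - q₂ 0) * (q₂ 0 - q₃ 0) * (q₃ 0 - q₁ 0)) := by
  simp only [paramDir, Matrix.cons_val]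
  ring

variable {q₁ q₂ q₃ u₁ u₂ u₃ : Fin 2 → ℝ}

lemma exists_det_joinMatrix_ne_zero (hq₁ : 0 < q₁ 0) (hq₂ : 0 < q₂ 0) (hq₃ : 0 < q₃ 0)
    (h₁₂ : q₁ 0 ≠ q₂ 0) (h₂₃ : q₂ 0 ≠ q₃ 0) (h₃₁ : q₃ 0 ≠ q₁ 0) (hu : ¬ (u₁ = u₂ ∧ u₁ = u₃)) :
    ∃ x : Fin 2 → ℝ, 0 < x 0 ∧ (joinMatrix q₁ q₂ q₃ u₁ u₂ u₃ x).det ≠ 0 := by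
  by_contra! h_det
  have ⟨hb₁, ha₁⟩ := eq_of_det_joinMatrix_same_angle_eq_zero fun h => h_det ![q₁ 0, h] hq₁
  have ⟨hb₂, ha₂⟩ := eq_of_det_joinMatrix_same_angle_eq_zero fun h =>
    (det_joinMatrix_rotate ..).trans (h_det ![q₂ 0, h] hq₂)
  have hS₁₂ := paramDir_zero_ne_zero hq₁ hq₂ h₁₂
  have hS₁₃ := paramDir_zero_ne_zero hq₁ hq₃ h₃₁.symm
  have hS₂₃ := paramDir_zero_ne_zero hq₂ hq₃ h₂₃
  have hS₂₁ := paramDir_zero_ne_zero hq₂ hq₁ h₁₂.symm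
  have h_swap (x y : Fin 2 → ℝ) : paramDir y x 0 = -paramDir x y 0 :=
    congr_fun (paramDir_swap x y) 0
  have hb₂₁ : u₂ 1 - u₁ 1 = 0 := by
    have h_sum : -4 * ((q₁ 0 - q₂ 0) * (q₂ 0 - q₃ 0) * (q₃ 0 - q₁ 0)) ≠ 0 := by
      simp [sub_eq_zero, h₁₂, h₂₃, h₃₁]
    rw [← cyclic_sum_paramDir_zero] at h_sum
    refine (mul_eq_zero.1 ?_).resolve_left h_sum
    rw [h_swap q₁ q₂] at hb₂
    rw [h_swap q₁ q₃]
    linear_combination hb₁ - hb₂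
  have hb₃₁ : u₃ 1 - u₁ 1 = 0 := by
    rw [hb₂₁, mul_zero] at hb₁
    have : 1 + q₃ 0 ^ 2 ≠ 0 := by positivity
    simpa [this, hS₁₂] using hb₁
  have ha₃₂ : u₃ 0 - u₂ 0 = 0 := by
    rw [hb₃₁, mul_zero, mul_zero] at ha₁
    simpa [hS₁₂, hS₁₃] using ha₁
  have ha₁₃ : u₁ 0 - u₃ 0 = 0 := by
    rw [← neg_sub (u₂ 1), hb₂₁, neg_zero, mul_zero, mul_zero] at ha₂
    simpa [hS₂₁, hS₂₃] using ha₂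
  refine hu ⟨?_, ?_⟩ <;> ext k <;> fin_cases k <;> dsimp <;> linarith

lemma exists_join_three (hq₁ : 0 < q₁ 0) (hq₂ : 0 < q₂ 0) (hq₃ : 0 < q₃ 0)
    (h₁₂ : q₁ 0 ≠ q₂ 0) (h₂₃ : q₂ 0 ≠ q₃ 0) (h₃₁ : q₃ 0 ≠ q₁ 0) (hu : ¬ (u₁ = u₂ ∧ u₁ = u₃))
    {B : Set ℝ} (hB : B.Finite) :
    ∃ x : Fin 2 → ℝ, 0 < x 0 ∧ x 0 ∉ B ∧ ∀ (A : Fin 2 → ℝ) (c : ℝ),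
      paramDir x q₁ ⬝ᵥ (A - c • u₁) = 0 → paramDir x q₂ ⬝ᵥ (A - c • u₂) = 0 →
      paramDir x q₃ ⬝ᵥ (A - c • u₃) = 0 → A = 0 ∧ c = 0 := by
  obtain ⟨x, hx, h_det⟩ := exists_det_joinMatrix_ne_zero hq₁ hq₂ hq₃ h₁₂ h₂₃ h₃₁ hu
  have h_cont : Continuous fun t : ℝ => (joinMatrix q₁ q₂ q₃ u₁ u₂ u₃ ![t, x 1]).det := by
    simp only [joinMatrix, Matrix.det_fin_three, paramDir, Matrix.vec2_dotProduct, Matrix.of_apply,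
      Matrix.cons_val]
    fun_prop
  have hx_eta : ![x 0, x 1] = x := by
    ext k
    fin_cases k <;> rfl
  have h_nhds : {t : ℝ | 0 < t ∧ (joinMatrix q₁ q₂ q₃ u₁ u₂ u₃ ![t, x 1]).det ≠ 0} ∈ nhds (x 0) :=
    ((isOpen_lt continuous_const continuous_id).inter (h_cont.isOpen_preimage _
      isOpen_compl_singleton)).mem_nhds ⟨hx, by simpa [hx_eta] using h_det⟩
  obtain ⟨t, ⟨ht, ht_det⟩, htB⟩ := (infinite_of_mem_nhds _ h_nhds).exists_notMem_finite hB
  exact ⟨![t, x 1], ht, htB, fun _ _ => eq_zero_of_joinMatrix_det_ne_zero ht_det⟩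

lemma exists_join_two (hq₁ : 0 < q₁ 0) (hq₂ : 0 < q₂ 0) (h₁₂ : q₁ 0 ≠ q₂ 0) {B : Set ℝ}
    (hB : B.Finite) : ∃ x : Fin 2 → ℝ, 0 < x 0 ∧ x 0 ∉ B ∧
      ∀ A, paramDir x q₁ ⬝ᵥ A = 0 → paramDir x q₂ ⬝ᵥ A = 0 → A = 0 := by
  let q₃ : Fin 2 → ℝ := ![q₁ 0 + q₂ 0, 0]
  let u₃ : Fin 2 → ℝ := ![1, 0]
  have hu₃ : u₃ ≠ 0 := fun h => one_ne_zero (congr_fun h 0)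
  obtain ⟨x, hx, hxB, h_join⟩ := exists_join_three (q₃ := q₃) (u₁ := 0) (u₂ := 0) (u₃ := u₃) hq₁ hq₂
    (add_pos hq₁ hq₂) h₁₂ (by simp [q₃, hq₁.ne']) (by simp [q₃, hq₂.ne'])
    (by simp [hu₃.symm]) hB
  refine ⟨x, hx, hxB, fun A h₁ h₂ => ?_⟩
  have h₃ : paramDir x q₃ ⬝ᵥ u₃ ≠ 0 := by
    intro h
    have h₃ : paramDir x q₃ ⬝ᵥ (0 - (1 : ℝ) • u₃) = 0 := by
      rw [zero_sub, one_smul, dotProduct_neg, h, neg_zero]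
    exact one_ne_zero (h_join 0 1 (by simp) (by simp) h₃).2
  refine (h_join A ((paramDir x q₃ ⬝ᵥ A) / (paramDir x q₃ ⬝ᵥ u₃)) (by simpa using h₁)
    (by simpa using h₂) ?_).1
  rw [dotProduct_sub, dotProduct_smul, smul_eq_mul, div_mul_cancel₀ _ h₃, sub_self]

end ThreeEdges

section TightMultigraphs

variable {V ι : Type*} [DecidableEq V] {W : Finset V} {E : Finset ι} {f : ι → Sym2 V} {v : V}

/-- The edges of the multigraph `(E, f)`, where `f e` is the pair of ends of `e`, with both ends
in `X`. -/
def inducedEdges (E : Finset ι) (f : ι → Sym2 V) (X : Finset V) : Finset ι :=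
  {e ∈ E | f e ∈ X.sym2}

/-- (2,2)-tightness of the multigraph with vertex set `W` and edge set `E`, the edge `e` having the
pair of ends `f e`. Parallel edges are allowed. -/
structure IsTightMultigraph (W : Finset V) (E : Finset ι) (f : ι → Sym2 V) : Prop where
  mem_sym2 : ∀ e ∈ E, f e ∈ W.sym2
  sparse : ∀ X ⊆ W, X.Nonempty → #(inducedEdges E f X) + 2 ≤ 2 * #X
  card_eq : #E + 2 = 2 * #W

lemma mem_inducedEdges {X : Finset V} {e : ι} :
    e ∈ inducedEdges E f X ↔ e ∈ E ∧ ∀ w ∈ f e, w ∈ X := by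
  simp [inducedEdges, Finset.mem_sym2_iff]

lemma inducedEdges_mono {E' : Finset ι} (hE : E' ⊆ E) (X : Finset V) :
    inducedEdges E' f X ⊆ inducedEdges E f X :=
  Finset.filter_subset_filter _ hE

lemma card_inducedEdges_add_le (X Y : Finset V) :
    #(inducedEdges E f X) + #(inducedEdges E f Y) ≤
      #(inducedEdges E f (X ∪ Y)) + #(inducedEdges E f (X ∩ Y)) := by
  classical
  have h_inter : inducedEdges E f X ∩ inducedEdges E f Y = inducedEdges E f (X ∩ Y) := by
    ext e
    simp only [Finset.mem_inter, mem_inducedEdges, forall_and]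
    tauto
  have h_union : inducedEdges E f X ∪ inducedEdges E f Y ⊆ inducedEdges E f (X ∪ Y) := by
    intro e
    simp only [Finset.mem_union, mem_inducedEdges]
    grind
  rw [← Finset.card_union_add_card_inter, h_inter]
  gcongr

lemma card_inducedEdges_insert {Z : Finset V} (hZ : ∀ e ∈ E, v ∈ f e → ∀ w ∈ f e, w ∈ insert v Z) :
    #(inducedEdges {e ∈ E | v ∉ f e} f Z) + #{e ∈ E | v ∈ f e} ≤
      #(inducedEdges E f (insert v Z)) := by
  classical
  rw [← Finset.card_union_of_disjoint]
  · refine Finset.card_le_card fun e he => ?_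
    simp only [Finset.mem_union, mem_inducedEdges, Finset.mem_filter] at he ⊢
    grind
  · rw [Finset.disjoint_left]
    intro e
    simp only [mem_inducedEdges, Finset.mem_filter]
    tauto

lemma exists_degree_le_three (hW : W.Nonempty) (h_card : #E + 2 ≤ 2 * #W) (f : ι → Sym2 V) :
    ∃ v ∈ W, #{e ∈ E | v ∈ f e} ≤ 3 := by
  by_contra! h_deg
  have h_ends (e : Sym2 V) : #{v ∈ W | v ∈ e} ≤ 2 := by
    induction e with | _ i j
    refine (Finset.card_le_card (t := {i, j}) ?_).trans Finset.card_le_two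
    intro w
    simp
  have h_double_count :=
    Finset.sum_card_bipartiteAbove_eq_sum_card_bipartiteBelow (s := W) (t := E) (fun v e => v ∈ f e)
  have h_lower := Finset.card_nsmul_le_sum W _ 4 h_deg
  have h_upper := Finset.sum_le_card_nsmul E _ 2 fun e _ => h_ends (f e)
  simp only [Finset.bipartiteAbove, Finset.bipartiteBelow, smul_eq_mul] at *
  have := hW.card_pos
  omega

namespace IsTightMultigraph

lemma inducedEdges_erase (h : IsTightMultigraph W E f) (v : V) :
    inducedEdges E f (W.erase v) = {e ∈ E | v ∉ f e} := by
  ext e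
  have := h.mem_sym2 e
  simp only [Finset.mem_sym2_iff] at this
  simp only [mem_inducedEdges, Finset.mem_erase, Finset.mem_filter]
  grind

lemma exists_eq_mk (h : IsTightMultigraph W E f) {e : ι} (he : e ∈ E) (hve : v ∈ f e) :
    ∃ w ∈ W.erase v, f e = s(v, w) := by
  obtain ⟨w, hw⟩ := hve
  have h_mem := h.mem_sym2 e he
  rw [hw, Finset.mk_mem_sym2_iff] at h_mem
  refine ⟨w, Finset.mem_erase.2 ⟨?_, h_mem.2⟩, hw⟩
  rintro rfl
  have h_loop : e ∈ inducedEdges E f {w} := by simp [mem_inducedEdges, he, hw]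
  have h_pos := Finset.card_pos.2 ⟨e, h_loop⟩
  have := h.sparse {w} (by simpa using h_mem.1) (by simp)
  simp only [Finset.card_singleton] at this
  omega

lemma two_le_degree (h : IsTightMultigraph W E f) (hW : 2 ≤ #W) (hv : v ∈ W) :
    2 ≤ #{e ∈ E | v ∈ f e} := by
  have h_erase := Finset.card_erase_of_mem hv
  have h_sparse := h.sparse (W.erase v) (Finset.erase_subset _ _) (Finset.card_pos.1 (by omega))
  rw [h.inducedEdges_erase] at h_sparse
  have := Finset.card_filter_add_card_filter_not (s := E) fun e => v ∈ f e
  have := h.card_eq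
  omega

lemma erase_of_degree_eq_two (h : IsTightMultigraph W E f) (hv : v ∈ W)
    (h_deg : #{e ∈ E | v ∈ f e} = 2) : IsTightMultigraph (W.erase v) {e ∈ E | v ∉ f e} f where
  mem_sym2 e he := by
    rw [← h.inducedEdges_erase] at he
    exact (Finset.mem_filter.1 he).2
  sparse X hX hX_ne :=
    (Nat.add_le_add_right (Finset.card_le_card (inducedEdges_mono (Finset.filter_subset _ _) X))
      2).trans (h.sparse X (hX.trans (Finset.erase_subset _ _)) hX_ne)
  card_eq := by
    have h_erase := Finset.card_erase_of_mem hv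
    have := Finset.card_filter_add_card_filter_not (s := E) fun e => v ∈ f e
    have := h.card_eq
    have := Finset.card_pos.2 ⟨v, hv⟩
    omega

variable {w : ι → V}

/- If both pairs of neighbours lay in tight sets avoiding `v`, then the union of these sets would be
tight and `v` with its three edges would overfill it. -/
lemma tight_or_tight_not_tight [DecidableEq ι] (h : IsTightMultigraph W E f) (hv : v ∈ W)
    {e₁ e₂ e₃ : ι} (h_inc : {e ∈ E | v ∈ f e} = {e₁, e₂, e₃}) (h₁₂ : e₁ ≠ e₂) (h₁₃ : e₁ ≠ e₃)
    (h₂₃ : e₂ ≠ e₃) (hw : ∀ e ∈ E, v ∈ f e → f e = s(v, w e)) {X Y : Finset V}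
    (hX : X ⊆ W.erase v) (hX₁ : w e₁ ∈ X) (hX₂ : w e₂ ∈ X) (hY : Y ⊆ W.erase v) (hY₁ : w e₁ ∈ Y)
    (hY₃ : w e₃ ∈ Y) :
    #(inducedEdges {e ∈ E | v ∉ f e} f X) + 3 ≤ 2 * #X ∨
      #(inducedEdges {e ∈ E | v ∉ f e} f Y) + 3 ≤ 2 * #Y := by
  have hXY : X ∪ Y ⊆ W.erase v := Finset.union_subset hX hY
  have h_super := card_inducedEdges_add_le (E := {e ∈ E | v ∉ f e}) (f := f) X Y
  have h_inter := h.sparse (X ∩ Y)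
    (Finset.inter_subset_left.trans (hX.trans (Finset.erase_subset _ _)))
    ⟨w e₁, Finset.mem_inter.2 ⟨hX₁, hY₁⟩⟩
  have h_inter_le := Finset.card_le_card
    (inducedEdges_mono (f := f) (Finset.filter_subset (fun e => v ∉ f e) E) (X ∩ Y))
  have h_insert := h.sparse (insert v (X ∪ Y))
    (Finset.insert_subset hv (hXY.trans (Finset.erase_subset _ _))) (Finset.insert_nonempty _ _)
  have h_count := card_inducedEdges_insert (E := E) (f := f) (v := v) (Z := X ∪ Y) <| by
    intro e he hve
    have he_inc : e ∈ ({e₁, e₂, e₃} : Finset ι) := h_inc ▸ Finset.mem_filter.2 ⟨he, hve⟩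
    simp only [Finset.mem_insert, Finset.mem_singleton] at he_inc
    rw [hw e he hve]
    grind
  have h_three : #{e ∈ E | v ∈ f e} = 3 := by
    rw [h_inc]
    exact Finset.card_eq_three.2 ⟨_, _, _, h₁₂, h₁₃, h₂₃, rfl⟩
  rw [Finset.card_insert_of_notMem fun hv => Finset.notMem_erase _ _ (hXY hv)] at h_insert
  have := Finset.card_union_add_card_inter X Y
  omega

lemma exists_not_both_in_tight [DecidableEq ι] (h : IsTightMultigraph W E f) (hv : v ∈ W)
    (h_deg : #{e ∈ E | v ∈ f e} = 3) (hw : ∀ e ∈ E, v ∈ f e → f e = s(v, w e)) :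
    ∃ e₁ e₂ e₃, e₁ ≠ e₂ ∧ e₁ ≠ e₃ ∧ e₂ ≠ e₃ ∧ {e ∈ E | v ∈ f e} = {e₁, e₂, e₃} ∧
      ∀ X ⊆ W.erase v, w e₁ ∈ X → w e₂ ∈ X →
        #(inducedEdges {e ∈ E | v ∉ f e} f X) + 3 ≤ 2 * #X := by
  obtain ⟨e₁, e₂, e₃, h₁₂, h₁₃, h₂₃, h_inc⟩ := Finset.card_eq_three.1 h_deg
  by_contra! h_tight
  obtain ⟨X, hX, hX₁, hX₂, hX_tight⟩ := h_tight e₁ e₂ e₃ h₁₂ h₁₃ h₂₃ h_inc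
  obtain ⟨Y, hY, hY₁, hY₃, hY_tight⟩ := h_tight e₁ e₃ e₂ h₁₃ h₁₂ h₂₃.symm
    (by rw [h_inc, Finset.pair_comm])
  have := h.tight_or_tight_not_tight hv h_inc h₁₂ h₁₃ h₂₃ hw hX hX₁ hX₂ hY hY₁ hY₃
  omega

lemma erase_of_degree_eq_three [DecidableEq ι] (h : IsTightMultigraph W E f) (hv : v ∈ W)
    (h_deg : #{e ∈ E | v ∈ f e} = 3) {e₁ : ι} (hve₁ : v ∈ f e₁) {w₁ w₂ : V}
    (hw₁ : w₁ ∈ W.erase v) (hw₂ : w₂ ∈ W.erase v)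
    (h_not_tight : ∀ X ⊆ W.erase v, w₁ ∈ X → w₂ ∈ X →
      #(inducedEdges {e ∈ E | v ∉ f e} f X) + 3 ≤ 2 * #X) :
    IsTightMultigraph (W.erase v) (insert e₁ {e ∈ E | v ∉ f e})
      (Function.update f e₁ s(w₁, w₂)) where
  mem_sym2 e he := by
    by_cases hee₁ : e = e₁
    · rw [hee₁, Function.update_self]
      exact Finset.mk_mem_sym2_iff.2 ⟨hw₁, hw₂⟩
    · rw [Function.update_of_ne hee₁]
      have he' := Finset.mem_of_mem_insert_of_ne he hee₁
      rw [← h.inducedEdges_erase] at he'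
      exact (Finset.mem_filter.1 he').2
  sparse X hX hX_ne := by
    by_cases hw : w₁ ∈ X ∧ w₂ ∈ X
    · have h_sub : inducedEdges (insert e₁ {e ∈ E | v ∉ f e}) (Function.update f e₁ s(w₁, w₂)) X ⊆
          insert e₁ (inducedEdges {e ∈ E | v ∉ f e} f X) := by
        intro e
        simp only [mem_inducedEdges, Finset.mem_insert]
        grind
      have := (Finset.card_le_card h_sub).trans (Finset.card_insert_le _ _)
      have := h_not_tight X hX hw.1 hw.2
      omega
    · have h_sub : inducedEdges (insert e₁ {e ∈ E | v ∉ f e}) (Function.update f e₁ s(w₁, w₂)) X ⊆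
          inducedEdges E f X := by
        intro e
        simp only [mem_inducedEdges, Finset.mem_insert, Finset.mem_filter]
        by_cases hee₁ : e = e₁
        · simp [hee₁, hw]
        · rw [Function.update_of_ne hee₁]
          tauto
      exact (Nat.add_le_add_right (Finset.card_le_card h_sub) 2).trans
        (h.sparse X (hX.trans (Finset.erase_subset _ _)) hX_ne)
  card_eq := by
    have h_erase := Finset.card_erase_of_mem hv
    have := Finset.card_filter_add_card_filter_not (s := E) fun e => v ∈ f e
    have := h.card_eq
    have := Finset.card_pos.2 ⟨v, hv⟩
    rw [Finset.card_insert_of_notMem (by simp [hve₁])]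
    omega

end IsTightMultigraph

end TightMultigraphs

section RigidPlacements

variable {V ι : Type*} {W : Finset V} {E : Finset ι} {f : ι → Sym2 V} {R : Set ι}
  {x : V → Fin 2 → ℝ} {D : ι → Fin 2 → ℝ}

/-- The velocities that satisfy the equation with coefficients `D e` for each edge `e` of the
multigraph `(E, f)`. -/
def flexSpace (E : Finset ι) (f : ι → Sym2 V) (D : ι → Fin 2 → ℝ) :
    Submodule ℝ (V → Fin 2 → ℝ) where
  carrier := {u | ∀ e ∈ E, ∀ i j, f e = s(i, j) → D e ⬝ᵥ (u i - u j) = 0}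
  zero_mem' e _ i j _ := by rw [Pi.zero_apply, Pi.zero_apply, sub_zero, dotProduct_zero]
  add_mem' hu hu' e he i j hij := by
    rw [Pi.add_apply, Pi.add_apply, add_sub_add_comm, dotProduct_add, hu e he i j hij,
      hu' e he i j hij, add_zero]
  smul_mem' c u hu e he i j hij := by
    rw [Pi.smul_apply, Pi.smul_apply, ← smul_sub, dotProduct_smul, hu e he i j hij, smul_zero]

/-- Points on the cylinder in general position, given by their parameters `x`, together with
coefficients `D` for all edges. The edges in `R` are real: their coefficients are determined by the
positions of their ends. The coefficients of the other, virtual edges are arbitrary. Positivity of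
the angular parameters excludes opposite vertical lines, whose points are joined by edges that do
not see the angular velocities. -/
structure IsPlacement (W : Finset V) (E : Finset ι) (f : ι → Sym2 V) (R : Set ι)
    (x : V → Fin 2 → ℝ) (D : ι → Fin 2 → ℝ) : Prop where
  pos : ∀ v ∈ W, 0 < x v 0
  injOn : Set.InjOn (fun v => x v 0) W
  dir_eq : ∀ e ∈ E, e ∈ R → ∀ i j, f e = s(i, j) →
    D e = paramDir (x i) (x j) ∨ D e = paramDir (x j) (x i)

/-- The existence of a placement all of whose flexes are constant on the vertex set. -/
def HasRigidPlacement (W : Finset V) (E : Finset ι) (f : ι → Sym2 V) (R : Set ι) : Prop :=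
  ∃ x D, IsPlacement W E f R x D ∧ ∀ u ∈ flexSpace E f D, ∃ b, ∀ w ∈ W, u w = b

lemma exists_pos_injOn_extension {α : Type*} {N S : Set α} (hN : N.Finite) {g : α → Fin 2 → ℝ}
    (hg_pos : ∀ a ∈ N ∩ S, 0 < g a 0) (hg_inj : Set.InjOn (fun a => g a 0) (N ∩ S)) :
    ∃ q : α → Fin 2 → ℝ, (∀ a ∈ S, q a = g a) ∧ (∀ a ∈ N, 0 < q a 0) ∧
      Set.InjOn (fun a => q a 0) N := by
  classical
  have h_infinite : (Set.Ioi 0 \ (fun a => g a 0) '' N).Infinite :=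
    (Set.Ioi_infinite 0).sdiff (hN.image _)
  obtain ⟨k, hk_maps, hk_inj⟩ := (hN.subset Set.sdiff_subset).exists_injOn_of_encard_le
    (s := N \ S) (t := Set.Ioi 0 \ (fun a => g a 0) '' N) (by simp [h_infinite.encard_eq])
  refine ⟨S.piecewise g fun a => ![k a, 0], fun a ha => Set.piecewise_eq_of_mem _ _ _ ha,
    fun a ha => ?_, fun a ha b hb hab => ?_⟩
  · by_cases haS : a ∈ S
    · simpa [haS] using hg_pos a ⟨ha, haS⟩
    · simpa [haS] using (hk_maps ⟨ha, haS⟩).1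
  · by_cases haS : a ∈ S <;> by_cases hbS : b ∈ S <;> simp only [haS, hbS, not_false_eq_true,
      Set.piecewise_eq_of_mem, Set.piecewise_eq_of_notMem, Matrix.cons_val_zero] at hab
    · exact hg_inj ⟨ha, haS⟩ ⟨hb, hbS⟩ hab
    · exact absurd ⟨a, ha, hab⟩ (hk_maps ⟨hb, hbS⟩).2
    · exact absurd ⟨b, hb, hab.symm⟩ (hk_maps ⟨ha, haS⟩).2
    · exact hk_inj ⟨ha, haS⟩ ⟨hb, hbS⟩ hab

lemma exists_sub_smul_const {N : Finset V} {F : Submodule ℝ (V → Fin 2 → ℝ)} {a : Fin 2 → ℝ}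
    {w₁ w₂ : V} (hw : w₁ ≠ w₂)
    (hF : ∀ u ∈ F, a ⬝ᵥ (u w₁ - u w₂) = 0 → ∃ b, ∀ w ∈ N, u w = b) :
    ∃ u₀ : V → Fin 2 → ℝ, u₀ w₁ ≠ u₀ w₂ ∧ ∀ u ∈ F, ∃ b, ∃ c : ℝ, ∀ w ∈ N, u w = b + c • u₀ w := by
  by_cases h_free : ∃ u₀ ∈ F, a ⬝ᵥ (u₀ w₁ - u₀ w₂) ≠ 0
  · obtain ⟨u₀, hu₀, h_ne⟩ := h_free
    refine ⟨u₀, fun h_eq => h_ne (by rw [h_eq, sub_self, dotProduct_zero]), fun u hu => ?_⟩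
    set c := a ⬝ᵥ (u w₁ - u w₂) / a ⬝ᵥ (u₀ w₁ - u₀ w₂) with hc
    obtain ⟨b, hb⟩ := hF (u - c • u₀) (F.sub_mem hu (F.smul_mem c hu₀)) <| by
      rw [Pi.sub_apply, Pi.sub_apply, Pi.smul_apply, Pi.smul_apply, sub_sub_sub_comm, ← smul_sub,
        dotProduct_sub, dotProduct_smul, smul_eq_mul, hc, div_mul_cancel₀ _ h_ne, sub_self]
    exact ⟨b, c, fun w hw => eq_add_of_sub_eq (hb w hw)⟩
  · push Not at h_free
    classical
    refine ⟨Pi.single w₁ 1, by simp [hw.symm], fun u hu => ?_⟩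
    obtain ⟨b, hb⟩ := hF u hu (h_free u hu)
    exact ⟨b, 0, fun w hw => by rw [hb w hw, zero_smul, add_zero]⟩

lemma mem_flexSpace_insert_update [DecidableEq ι] {e₁ : ι} (he₁ : e₁ ∉ E) {w₁ w₂ : V}
    {u : V → Fin 2 → ℝ} (hu : u ∈ flexSpace E f D) (hu₁ : D e₁ ⬝ᵥ (u w₁ - u w₂) = 0) :
    u ∈ flexSpace (insert e₁ E) (Function.update f e₁ s(w₁, w₂)) D := by
  intro e he i j hij
  obtain rfl | he := Finset.mem_insert.1 he
  · rw [Function.update_self, Sym2.eq_iff] at hij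
    obtain ⟨rfl, rfl⟩ | ⟨rfl, rfl⟩ := hij
    · exact hu₁
    · rw [← neg_sub, dotProduct_neg, hu₁, neg_zero]
  · rw [Function.update_of_ne (ne_of_mem_of_not_mem he he₁)] at hij
    exact hu e he i j hij

lemma IsPlacement.of_insert_update [DecidableEq ι] {e₁ : ι} (he₁ : e₁ ∉ E) {s : Sym2 V}
    (h : IsPlacement W (insert e₁ E) (Function.update f e₁ s) (R \ {e₁}) x D) :
    IsPlacement W E f R x D where
  pos := h.pos
  injOn := h.injOn
  dir_eq e he heR i j hij := by
    have hee₁ := ne_of_mem_of_not_mem he he₁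
    exact h.dir_eq e (Finset.mem_insert_of_mem he) ⟨heR, hee₁⟩ i j <| by
      rwa [Function.update_of_ne hee₁]

lemma hasRigidPlacement_singleton (v : V) (f : ι → Sym2 V) (R : Set ι) :
    HasRigidPlacement {v} ∅ f R :=
  ⟨fun _ _ => 1, 0, ⟨by simp, by simp, by simp⟩, fun u _ => ⟨u v, by simp⟩⟩

variable [DecidableEq V] {v : V} {w : ι → V} {y : Fin 2 → ℝ} {q : ι → Fin 2 → ℝ}

/-- The coefficients obtained from `D` by joining a new point `y` for the vertex `v` to the
positions `q e`. -/
def joinDir (f : ι → Sym2 V) (v : V) (y : Fin 2 → ℝ) (q D : ι → Fin 2 → ℝ) (e : ι) : Fin 2 → ℝ :=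
  if v ∈ f e then paramDir y (q e) else D e

lemma IsPlacement.join (h : IsPlacement (W.erase v) {e ∈ E | v ∉ f e} f R x D)
    (hw : ∀ e ∈ E, v ∈ f e → w e ∈ W.erase v ∧ f e = s(v, w e)) (hy : 0 < y 0)
    (hyx : y 0 ∉ (fun i => x i 0) '' (W.erase v : Finset V))
    (hq : ∀ e ∈ R, q e = x (w e)) :
    IsPlacement W E f R (Function.update x v y) (joinDir f v y q D) where
  pos i hi := by
    obtain rfl | hiv := eq_or_ne i v
    · simpa using hy
    · simpa [hiv] using h.pos i (Finset.mem_erase.2 ⟨hiv, hi⟩)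
  injOn := by
    have h_eqOn : Set.EqOn (fun i => Function.update x v y i 0) (fun i => x i 0)
        (W.erase v : Finset V) := fun i hi => by
      simp [Function.update_of_ne (Finset.mem_erase.1 hi).1]
    refine Set.InjOn.mono (s₂ := insert v (W.erase v : Finset V))
      (by simp) ?_
    refine (Set.injOn_insert (by simp)).2 ⟨h.injOn.congr h_eqOn.symm, ?_⟩
    rwa [h_eqOn.image_eq, Function.update_self]
  dir_eq e he heR i j hij := by
    by_cases hve : v ∈ f e
    · obtain ⟨hwe, hfe⟩ := hw e he hve
      have hwv := (Finset.mem_erase.1 hwe).1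
      rw [hfe, Sym2.eq_iff] at hij
      rw [joinDir, if_pos hve, hq e heR]
      obtain ⟨rfl, rfl⟩ | ⟨rfl, rfl⟩ := hij
      · simp [Function.update_of_ne hwv]
      · simp [Function.update_of_ne hwv]
    · rw [joinDir, if_neg hve]
      rw [hij, Sym2.mem_iff, not_or] at hve
      rw [Function.update_of_ne (Ne.symm hve.1), Function.update_of_ne (Ne.symm hve.2)]
      refine h.dir_eq e (Finset.mem_filter.2 ⟨he, ?_⟩) heR i j hij
      simpa [hij] using hve

lemma mem_flexSpace_of_joinDir {u : V → Fin 2 → ℝ} (hu : u ∈ flexSpace E f (joinDir f v y q D)) :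
    u ∈ flexSpace {e ∈ E | v ∉ f e} f D := by
  intro e he i j hij
  obtain ⟨he, hve⟩ := Finset.mem_filter.1 he
  simpa only [joinDir, if_neg hve] using hu e he i j hij

lemma paramDir_dotProduct_eq_zero_of_joinDir {u : V → Fin 2 → ℝ}
    (hu : u ∈ flexSpace E f (joinDir f v y q D)) {e : ι} (he : e ∈ E) {j : V}
    (hfe : f e = s(v, j)) :
    paramDir y (q e) ⬝ᵥ (u v - u j) = 0 := by
  have hve : v ∈ f e := hfe ▸ Sym2.mem_mk_left v j
  simpa only [joinDir, if_pos hve] using hu e he v j hfe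

lemma IsPlacement.exists_neighbour_positions (h : IsPlacement (W.erase v) {e ∈ E | v ∉ f e} f R x D)
    (hw : ∀ e ∈ E, v ∈ f e → w e ∈ W.erase v ∧ f e = s(v, w e)) (hinj : Set.InjOn f (E ∩ R)) :
    ∃ q : ι → Fin 2 → ℝ, (∀ e ∈ R, q e = x (w e)) ∧ (∀ e ∈ E, v ∈ f e → 0 < q e 0) ∧
      Set.InjOn (fun e => q e 0) {e ∈ E | v ∈ f e} := by
  have h_finite : {e ∈ (E : Set ι) | v ∈ f e}.Finite := E.finite_toSet.subset (Set.sep_subset _ _)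
  obtain ⟨q, hq_eq, hq_pos, hq_inj⟩ :=
    exists_pos_injOn_extension (S := R) h_finite (g := fun e => x (w e))
      (fun e he => h.pos _ (hw e he.1.1 he.1.2).1) fun e he e' he' hee' => by
        obtain ⟨hwe, hfe⟩ := hw e he.1.1 he.1.2
        obtain ⟨hwe', hfe'⟩ := hw e' he'.1.1 he'.1.2
        refine hinj ⟨he.1.1, he.2⟩ ⟨he'.1.1, he'.2⟩ ?_
        rw [hfe, hfe', h.injOn hwe hwe' hee']
  exact ⟨q, hq_eq, fun e he hve => hq_pos e ⟨he, hve⟩, hq_inj⟩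

lemma HasRigidPlacement.join_two {e₁ e₂ : ι}
    (h : HasRigidPlacement (W.erase v) {e ∈ E | v ∉ f e} f R)
    (hw : ∀ e ∈ E, v ∈ f e → w e ∈ W.erase v ∧ f e = s(v, w e)) (hinj : Set.InjOn f (E ∩ R))
    (he : e₁ ≠ e₂) (he₁ : e₁ ∈ {e ∈ E | v ∈ f e}) (he₂ : e₂ ∈ {e ∈ E | v ∈ f e}) :
    HasRigidPlacement W E f R := by
  obtain ⟨x, D, hx, h_rigid⟩ := h
  rw [Finset.mem_filter] at he₁ he₂
  obtain ⟨q, hq_eq, hq_pos, hq_inj⟩ := hx.exists_neighbour_positions hw hinj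
  obtain ⟨y, hy, hyx, h_solve⟩ := exists_join_two (hq_pos e₁ he₁.1 he₁.2) (hq_pos e₂ he₂.1 he₂.2)
    (hq_inj.ne he₁ he₂ he) ((W.erase v).finite_toSet.image fun i => x i 0)
  refine ⟨Function.update x v y, joinDir f v y q D, hx.join hw hy hyx hq_eq,
    fun u hu => ?_⟩
  obtain ⟨b, hb⟩ := h_rigid u (mem_flexSpace_of_joinDir hu)
  have h_row {e : ι} (he : e ∈ E ∧ v ∈ f e) : paramDir y (q e) ⬝ᵥ (u v - b) = 0 := by
    obtain ⟨hwe, hfe⟩ := hw e he.1 he.2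
    rw [← hb _ hwe]
    exact paramDir_dotProduct_eq_zero_of_joinDir hu he.1 hfe
  have huv : u v = b := sub_eq_zero.1 (h_solve _ (h_row he₁) (h_row he₂))
  exact ⟨b, fun i hi => (eq_or_ne i v).elim (fun hiv => hiv ▸ huv)
    fun hiv => hb i (Finset.mem_erase.2 ⟨hiv, hi⟩)⟩

lemma HasRigidPlacement.join_three [DecidableEq ι] {e₁ e₂ e₃ : ι}
    (h : HasRigidPlacement (W.erase v) (insert e₁ {e ∈ E | v ∉ f e})
      (Function.update f e₁ s(w e₁, w e₂)) (R \ {e₁}))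
    (hw : ∀ e ∈ E, v ∈ f e → w e ∈ W.erase v ∧ f e = s(v, w e)) (hinj : Set.InjOn f (E ∩ R))
    (he₁₂ : e₁ ≠ e₂) (he₁₃ : e₁ ≠ e₃) (he₂₃ : e₂ ≠ e₃) (he₁ : e₁ ∈ {e ∈ E | v ∈ f e})
    (he₂ : e₂ ∈ {e ∈ E | v ∈ f e}) (he₃ : e₃ ∈ {e ∈ E | v ∈ f e}) (hw₁₂ : w e₁ ≠ w e₂) :
    HasRigidPlacement W E f R := by
  obtain ⟨x, D, hx, h_rigid⟩ := h
  have he₁_notMem : e₁ ∉ ({e ∈ E | v ∉ f e} : Finset ι) := fun h_mem =>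
    (Finset.mem_filter.1 h_mem).2 (Finset.mem_filter.1 he₁).2
  replace hx := hx.of_insert_update he₁_notMem
  rw [Finset.mem_filter] at he₁ he₂ he₃
  obtain ⟨u₀, hu₀, h_span⟩ := exists_sub_smul_const hw₁₂ fun u hu hu₁ =>
    h_rigid u (mem_flexSpace_insert_update he₁_notMem hu hu₁)
  obtain ⟨q, hq_eq, hq_pos, hq_inj⟩ := hx.exists_neighbour_positions hw hinj
  obtain ⟨y, hy, hyx, h_solve⟩ := exists_join_three (hq_pos e₁ he₁.1 he₁.2)
    (hq_pos e₂ he₂.1 he₂.2) (hq_pos e₃ he₃.1 he₃.2) (hq_inj.ne he₁ he₂ he₁₂)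
    (hq_inj.ne he₂ he₃ he₂₃) (hq_inj.ne he₃ he₁ he₁₃.symm)
    (u₁ := u₀ (w e₁)) (u₂ := u₀ (w e₂)) (u₃ := u₀ (w e₃)) (fun h_eq => hu₀ h_eq.1)
    ((W.erase v).finite_toSet.image fun i => x i 0)
  refine ⟨Function.update x v y, joinDir f v y q D, hx.join hw hy hyx hq_eq,
    fun u hu => ?_⟩
  obtain ⟨b, c, hbc⟩ := h_span u (mem_flexSpace_of_joinDir hu)
  have h_row {e : ι} (he : e ∈ E ∧ v ∈ f e) :
      paramDir y (q e) ⬝ᵥ (u v - b - c • u₀ (w e)) = 0 := by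
    obtain ⟨hwe, hfe⟩ := hw e he.1 he.2
    rw [sub_sub, ← hbc _ hwe]
    exact paramDir_dotProduct_eq_zero_of_joinDir hu he.1 hfe
  obtain ⟨huv, rfl⟩ := h_solve _ c (h_row he₁) (h_row he₂) (h_row he₃)
  refine ⟨b, fun i hi => (eq_or_ne i v).elim (fun hiv => hiv ▸ sub_eq_zero.1 huv) fun hiv => ?_⟩
  rw [hbc i (Finset.mem_erase.2 ⟨hiv, hi⟩), zero_smul, add_zero]

lemma IsTightMultigraph.hasRigidPlacement_of_degree_eq_three (h : IsTightMultigraph W E f)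
    (hv : v ∈ W) (h_deg : #{e ∈ E | v ∈ f e} = 3)
    (hw : ∀ e ∈ E, v ∈ f e → w e ∈ W.erase v ∧ f e = s(v, w e)) (hinj : Set.InjOn f (E ∩ R))
    (ih : ∀ (E' : Finset ι) (f' : ι → Sym2 V) (R' : Set ι), IsTightMultigraph (W.erase v) E' f' →
      Set.InjOn f' (E' ∩ R') → HasRigidPlacement (W.erase v) E' f' R') :
    HasRigidPlacement W E f R := by
  classical
  obtain ⟨e₁, e₂, e₃, he₁₂, he₁₃, he₂₃, h_eq, h_not_tight⟩ :=
    h.exists_not_both_in_tight hv h_deg fun e he hve => (hw e he hve).2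
  have h_mem {e : ι} (he : e ∈ ({e₁, e₂, e₃} : Finset ι)) : e ∈ E ∧ v ∈ f e := by
    rwa [← h_eq, Finset.mem_filter] at he
  obtain ⟨he₁, hve₁⟩ := h_mem (e := e₁) (by simp)
  obtain ⟨he₂, hve₂⟩ := h_mem (e := e₂) (by simp)
  have hwe₁ := (hw e₁ he₁ hve₁).1
  have hwe₂ := (hw e₂ he₂ hve₂).1
  have hw₁₂ : w e₁ ≠ w e₂ := fun h_same => by
    have := h_not_tight {w e₁} (by simpa using hwe₁) (by simp) (by simp [h_same])
    simp only [Finset.card_singleton] at this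
    omega
  have h_reduced := h.erase_of_degree_eq_three hv h_deg hve₁ hwe₁ hwe₂ h_not_tight
  refine (ih _ _ (R \ {e₁}) h_reduced ?_).join_three hw hinj he₁₂ he₁₃ he₂₃
    (by simp [h_eq]) (by simp [h_eq]) (by simp [h_eq]) hw₁₂
  refine (hinj.mono ?_).congr fun e he => (Function.update_of_ne he.2.2 _ _).symm
  rintro e ⟨he, heR, hne⟩
  exact ⟨(Finset.mem_filter.1 (Finset.mem_of_mem_insert_of_ne he hne)).1, heR⟩

theorem IsTightMultigraph.hasRigidPlacement (h : IsTightMultigraph W E f) (hW : W.Nonempty)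
    (hinj : Set.InjOn f (E ∩ R)) : HasRigidPlacement W E f R := by
  classical
  induction hn : #W generalizing W E f R with
  | zero => exact absurd hW (by simpa using hn)
  | succ n ih =>
    obtain hW_one | hW_two := (Nat.one_le_iff_ne_zero.2 hW.card_ne_zero).eq_or_lt'
    · obtain ⟨v, rfl⟩ := Finset.card_eq_one.1 hW_one
      obtain rfl : E = ∅ := by simpa using h.card_eq
      exact hasRigidPlacement_singleton v f R
    obtain ⟨v, hv, h_le⟩ := exists_degree_le_three hW h.card_eq.le f
    have hW' : #(W.erase v) = n := by rw [Finset.card_erase_of_mem hv, hn, Nat.add_sub_cancel]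
    have hW'_nonempty : (W.erase v).Nonempty := Finset.card_pos.1 (by omega)
    have : Nonempty V := ⟨v⟩
    choose! w hw using fun e (he : e ∈ E) (hve : v ∈ f e) => h.exists_eq_mk he hve
    obtain h_deg | h_deg : #{e ∈ E | v ∈ f e} = 2 ∨ #{e ∈ E | v ∈ f e} = 3 := by
      have := h.two_le_degree hW_two hv
      omega
    · obtain ⟨e₁, e₂, he, h_eq⟩ := Finset.card_eq_two.1 h_deg
      refine (ih (h.erase_of_degree_eq_two hv h_deg) hW'_nonempty (hinj.mono ?_) hW').join_two hw
        hinj he (by simp [h_eq]) (by simp [h_eq])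
      exact Set.inter_subset_inter_left R (Finset.coe_subset.2 (Finset.filter_subset _ E))
    · exact h.hasRigidPlacement_of_degree_eq_three hv h_deg hw hinj fun E' f' R' h' hinj' =>
        ih h' hW'_nonempty hinj' hW'

lemma Tight22.isTightMultigraph {V : Type} [Fintype V] [DecidableEq V] [Nonempty V]
    {G : SimpleGraph V} [Fintype G.edgeSet] (hG : Tight22 G) :
    IsTightMultigraph Finset.univ G.edgeFinset id where
  mem_sym2 := by simp
  sparse X _ hX := by
    have := hG.2 X (inducedEdges G.edgeFinset id X) (fun e he => by
      simpa using (mem_inducedEdges.1 he).1) (fun e he => (mem_inducedEdges.1 he).2) hX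
    omega
  card_eq := by
    have h_card := hG.1
    rw [← SimpleGraph.coe_edgeFinset, Set.ncard_coe_finset] at h_card
    have : 0 < Fintype.card V := Fintype.card_pos
    rw [Finset.card_univ]
    omega

theorem Tight22.exists_dirRigid {V : Type} [Fintype V] [Nonempty V] {G : SimpleGraph V}
    (hG : Tight22 G) : ∃ x : V → Fin 2 → ℝ, DirRigid G fun i j => paramDir (x i) (x j) := by
  classical
  obtain ⟨x, D, hx, h_rigid⟩ := hG.isTightMultigraph.hasRigidPlacement Finset.univ_nonempty
    (R := Set.univ) Function.injective_id.injOn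
  refine ⟨x, fun u hu => ?_⟩
  have hu_flex : u ∈ flexSpace G.edgeFinset id D := by
    intro e he i j hij
    have h_adj : G.Adj i j := by
      rwa [← SimpleGraph.mem_edgeSet, ← hij, id_eq, ← SimpleGraph.mem_edgeFinset]
    obtain h_eq | h_eq := hx.dir_eq e he trivial i j hij
    · rw [h_eq, hu h_adj]
    · rw [h_eq, paramDir_swap, neg_dotProduct, hu h_adj, neg_zero]
  obtain ⟨b, hb⟩ := h_rigid u hu_flex
  exact fun i j => (hb i (Finset.mem_univ i)).trans (hb j (Finset.mem_univ j)).symm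

end RigidPlacements

section Genericity

lemma algebraicIndependent_of_isAlgebraic_of_card_le {ι κ K F : Type*} [Fintype ι] [Fintype κ]
    [CommRing K] [CommRing F] [IsDomain F] [Algebra K F] {x : ι → F} {y : κ → F}
    (hy : AlgebraicIndependent K y)
    (h_alg : ∀ k, IsAlgebraic (Algebra.adjoin K (Set.range x)) (y k))
    (h_card : Fintype.card ι ≤ Fintype.card κ) : AlgebraicIndependent K x := by
  have : FaithfulSMul K F := (faithfulSMul_iff_algebraMap_injective K F).2 hy.algebraMap_injective
  let M := AlgebraicIndependent.matroid K F
  have : Nontrivial K := (algebraMap K F).domain_nontrivial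
  have h_indep : M.Indep (Set.range y) := hy.to_subtype_range
  have h_closure : Set.range y ⊆ M.closure (Set.range x) := by
    rw [AlgebraicIndependent.matroid_closure_eq, Set.range_subset_iff]
    exact fun k => (Subalgebra.mem_algebraicClosure _ F).2 (h_alg k)
  have h_card_le : (Set.univ : Set ι).encard ≤ M.eRk (Set.range x) := calc
    Set.univ.encard ≤ (Set.univ : Set κ).encard := by simpa using h_card
    _ = (Set.range y).encard := by rw [← hy.injective.encard_image, Set.image_univ]
    _ = M.eRk (Set.range y) := h_indep.eRk_eq_encard.symm
    _ ≤ M.eRk (M.closure (Set.range x)) := M.eRk_mono h_closure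
    _ = M.eRk (Set.range x) := M.eRk_closure_eq _
  have h_image_le : (x '' Set.univ).encard ≤ Set.univ.encard := Set.encard_image_le x _
  have h_injective : Set.InjOn x Set.univ := Set.finite_univ.injOn_of_encard_image_eq <|
    h_image_le.antisymm (h_card_le.trans (by rw [Set.image_univ]; exact M.eRk_le_encard _))
  rw [Set.image_univ] at h_image_le
  have h_indep_x : M.Indep (Set.range x) :=
    (Matroid.indep_iff_eRk_eq_encard_of_finite (Set.finite_range x)).2
      ((M.eRk_le_encard _).antisymm (h_image_le.trans h_card_le))
  exact (algebraicIndependent_subtype_range (Set.injOn_univ.1 h_injective)).1 h_indep_x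

lemma det_transpose_mul_self_ne_zero_iff {m n F : Type*} [Fintype m] [Fintype n] [DecidableEq n]
    [Field F] [LinearOrder F] [IsStrictOrderedRing F] (M : Matrix m n F) :
    (Mᵀ * M).det ≠ 0 ↔ Function.Injective M.mulVec := by
  rw [← isUnit_iff_ne_zero, ← Matrix.isUnit_iff_isUnit_det, ← Matrix.mulVec_injective_iff_isUnit,
    ← Matrix.coe_mulVecLin, ← Matrix.coe_mulVecLin, ← LinearMap.ker_eq_bot, ← LinearMap.ker_eq_bot,
    Matrix.ker_mulVecLin_transpose_mul_self]

lemma injective_mulVec_of_algebraicIndependent {m n σ K F : Type*} [Finite m] [Fintype n]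
    [CommRing K] [Field F] [LinearOrder F] [IsStrictOrderedRing F] [Algebra K F] {x y : σ → F}
    (hx : AlgebraicIndependent K x) (M : Matrix m n (MvPolynomial σ K))
    (hy : Function.Injective (M.map (MvPolynomial.aeval y)).mulVec) :
    Function.Injective (M.map (MvPolynomial.aeval x)).mulVec := by
  classical
  cases nonempty_fintype m
  have h_det (z : σ → F) : MvPolynomial.aeval z (Mᵀ * M).det =
      ((M.map (MvPolynomial.aeval z))ᵀ * M.map (MvPolynomial.aeval z)).det := by
    rw [AlgHom.map_det, AlgHom.mapMatrix_apply, Matrix.map_mul, Matrix.transpose_map]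
  rw [← det_transpose_mul_self_ne_zero_iff, ← h_det] at hy ⊢
  intro h_zero
  rw [hx.eq_zero_of_aeval_eq_zero _ h_zero, map_zero] at hy
  exact hy rfl

lemma eq_cylPoint {q : Fin 3 → ℝ} (h_circle : q 0 ^ 2 + q 1 ^ 2 = 1) (hq : 1 + q 0 ≠ 0) :
    q = cylPoint ![q 1 / (1 + q 0), q 2] := by
  have h_denom : (1 + q 0) ^ 2 + q 1 ^ 2 ≠ 0 := by positivity
  ext k
  fin_cases k
  · change q 0 = (1 - (q 1 / (1 + q 0)) ^ 2) / (1 + (q 1 / (1 + q 0)) ^ 2)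
    field_simp
    linear_combination (q 0 + 1) * h_circle
  · change q 1 = 2 * (q 1 / (1 + q 0)) / (1 + (q 1 / (1 + q 0)) ^ 2)
    field_simp
    linear_combination q 1 * h_circle
  · rfl

lemma isAlgebraic_cylPoint {A : Type*} [CommRing A] [IsDomain A] [Algebra A ℝ] {x : Fin 2 → ℝ}
    (hx : ∀ k, IsAlgebraic A (x k)) (k : Fin 3) : IsAlgebraic A (cylPoint x k) := by
  have h_denom := (isAlgebraic_one.add ((hx 0).pow 2)).inv
  fin_cases k
  · exact (isAlgebraic_one.sub ((hx 0).pow 2)).mul h_denom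
  · have h_two : IsAlgebraic A (2 : ℝ) := mod_cast isAlgebraic_natCast 2
    exact (h_two.mul (hx 0)).mul h_denom
  · exact hx 1

lemma isAlgebraic_of_circle {A : Type*} [CommRing A] [IsDomain A] [Algebra A ℝ] {q : Fin 3 → ℝ}
    (h_circle : q 0 ^ 2 + q 1 ^ 2 = 1)
    (h_param : ∀ k, IsAlgebraic A ((![q 1 / (1 + q 0), q 2] : Fin 2 → ℝ) k)) (k : Fin 3) :
    IsAlgebraic A (q k) := by
  by_cases hq : 1 + q 0 = 0
  · have hq₀ : q 0 = -1 := by linear_combination hq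
    have hq₁ : q 1 = 0 := by simpa [hq₀] using h_circle
    fin_cases k
    · exact hq₀ ▸ isAlgebraic_one.neg
    · exact hq₁ ▸ isAlgebraic_zero
    · exact h_param 1
  · rw [eq_cylPoint h_circle hq]
    exact isAlgebraic_cylPoint h_param k

lemma CylGeneric.exists_eq_cylPoint {V : Type} [Fintype V] {p : V → Fin 3 → ℝ}
    (hgen : CylGeneric p) (hcyl : OnCylinder p) :
    ∃ x : V → Fin 2 → ℝ, AlgebraicIndependent ℚ (fun vk : V × Fin 2 => x vk.1 vk.2) ∧
      p = fun v => cylPoint (x v) := by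
  obtain ⟨⟨S, hS_card, hS_indep⟩, -⟩ := hgen
  let x (v : V) : Fin 2 → ℝ := ![p v 1 / (1 + p v 0), p v 2]
  let A := Algebra.adjoin ℚ (Set.range fun vk : V × Fin 2 => x vk.1 vk.2)
  have h_alg (v : V) (k : Fin 2) : IsAlgebraic A (x v k) :=
    isAlgebraic_algebraMap (⟨x v k, Algebra.subset_adjoin ⟨(v, k), rfl⟩⟩ : A)
  have h_indep := algebraicIndependent_of_isAlgebraic_of_card_le hS_indep
    (fun vk => isAlgebraic_of_circle (hcyl vk.1.1) (h_alg vk.1.1) vk.1.2)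
    (by simp [hS_card, mul_comm])
  refine ⟨x, h_indep, funext fun v => eq_cylPoint (hcyl v) fun hv => h_indep.ne_zero (v, 0) ?_⟩
  simp [x, hv]

variable {V R S : Type*} [DecidableEq V] [CommRing R] [CommRing S]

/-- The matrix of the linear system that defines `DirRigid` for the coefficients `paramDir`, the
polynomial form of the rigidity matrix. The last two rows set the velocity of `v₀` to zero, so that
rigidity becomes injectivity. -/
def pinnedRigidityMatrix (G : SimpleGraph V) (v₀ : V) (x : V → Fin 2 → R) :
    Matrix (G.Dart ⊕ Fin 2) (V × Fin 2) R :=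
  Matrix.of <| Sum.elim
    (fun a vk => paramDir (x a.fst) (x a.snd) vk.2 *
      (Pi.single a.fst 1 - Pi.single a.snd 1 : V → R) vk.1)
    (fun k => Pi.single (v₀, k) 1)

lemma map_pinnedRigidityMatrix (f : R →+* S) (G : SimpleGraph V) (v₀ : V) (x : V → Fin 2 → R) :
    (pinnedRigidityMatrix G v₀ x).map f = pinnedRigidityMatrix G v₀ fun v => f ∘ x v := by
  ext r vk
  rcases r with a | k
  · simp [pinnedRigidityMatrix, map_paramDir, Pi.single_apply, apply_ite f]
  · simp [pinnedRigidityMatrix, Pi.single_apply, apply_ite f]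

lemma pinnedRigidityMatrix_mulVec_eq_zero_iff [Fintype V] {G : SimpleGraph V} {v₀ : V}
    {x u : V → Fin 2 → R} :
    pinnedRigidityMatrix G v₀ x *ᵥ (Function.uncurry u) = 0 ↔
      (∀ ⦃i j⦄, G.Adj i j → paramDir (x i) (x j) ⬝ᵥ (u i - u j) = 0) ∧ u v₀ = 0 := by
  have h_edge (a : G.Dart) :
      (pinnedRigidityMatrix G v₀ x *ᵥ Function.uncurry u) (Sum.inl a) =
        paramDir (x a.fst) (x a.snd) ⬝ᵥ (u a.fst - u a.snd) := by
    simp only [pinnedRigidityMatrix, Matrix.mulVec, dotProduct, Fintype.sum_prod_type_right,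
      Matrix.of_apply, Sum.elim_inl, Function.uncurry_apply_pair, mul_assoc, ← Finset.mul_sum]
    refine Finset.sum_congr rfl fun k _ => ?_
    have := sub_dotProduct (Pi.single a.fst 1) (Pi.single a.snd 1) (fun v => u v k)
    rw [single_one_dotProduct, single_one_dotProduct] at this
    rw [← dotProduct, this, Pi.sub_apply]
  have h_pin (k : Fin 2) :
      (pinnedRigidityMatrix G v₀ x *ᵥ Function.uncurry u) (Sum.inr k) = u v₀ k :=
    single_one_dotProduct _ _
  rw [funext_iff, Sum.forall, funext_iff]
  simp only [h_edge, h_pin, Pi.zero_apply]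
  exact and_congr_left' ⟨fun h i j hij => h ⟨(i, j), hij⟩, fun h a => h a.adj⟩

lemma dirRigid_iff_injective_mulVec [Fintype V] {G : SimpleGraph V} (v₀ : V)
    {x : V → Fin 2 → ℝ} : DirRigid G (fun i j => paramDir (x i) (x j)) ↔
      Function.Injective (pinnedRigidityMatrix G v₀ x).mulVec := by
  rw [← Matrix.coe_mulVecLin, ← LinearMap.ker_eq_bot, LinearMap.ker_eq_bot']
  simp only [Matrix.mulVecLin_apply]
  constructor
  · intro h u hu
    rw [← Function.uncurry_curry u, pinnedRigidityMatrix_mulVec_eq_zero_iff] at hu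
    ext ⟨v, k⟩
    exact congrFun ((h _ hu.1 v v₀).trans hu.2) k
  · intro h u hu
    have h_pinned := h (Function.uncurry fun v => u v - u v₀) <|
      pinnedRigidityMatrix_mulVec_eq_zero_iff.2
        ⟨fun i j hij => by rw [sub_sub_sub_cancel_right, hu hij], sub_self _⟩
    have h_eq (v : V) : u v = u v₀ := funext fun k => sub_eq_zero.1 (congrFun h_pinned (v, k))
    exact fun v w => (h_eq v).trans (h_eq w).symm

theorem DirRigid.of_algebraicIndependent {V : Type*} [Finite V] {G : SimpleGraph V}
    {x y : V → Fin 2 → ℝ} (hy : DirRigid G fun i j => paramDir (y i) (y j))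
    (hx : AlgebraicIndependent ℚ fun vk : V × Fin 2 => x vk.1 vk.2) :
    DirRigid G fun i j => paramDir (x i) (x j) := by
  classical
  cases nonempty_fintype V
  obtain _ | ⟨⟨v₀⟩⟩ := isEmpty_or_nonempty V
  · exact fun u _ v => isEmptyElim v
  let X (v : V) (k : Fin 2) : MvPolynomial (V × Fin 2) ℚ := MvPolynomial.X (v, k)
  have h_map (z : V → Fin 2 → ℝ) : (pinnedRigidityMatrix G v₀ X).map
      (MvPolynomial.aeval fun vk : V × Fin 2 => z vk.1 vk.2) = pinnedRigidityMatrix G v₀ z := by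
    have h_eval := map_pinnedRigidityMatrix
      (MvPolynomial.aeval fun vk : V × Fin 2 => z vk.1 vk.2).toRingHom G v₀ X
    simpa [Function.comp_def, X] using h_eval
  rw [dirRigid_iff_injective_mulVec v₀, ← h_map] at hy ⊢
  exact injective_mulVec_of_algebraicIndependent hx _ hy

end Genericity

/-- **Laman's theorem for the cylinder (Nixon–Owen–Power).** Let `G` be a (simple) graph with
at least 4 vertices and let `(G,p)` be a generic framework on the cylinder. Then `(G,p)` is
minimally infinitesimally rigid on the cylinder if and only if `G` is (2,2)-tight. -/
theorem statement_19 {V : Type} [Fintype V] (G : SimpleGraph V)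
    (hV : 4 ≤ Fintype.card V) (p : V → Fin 3 → ℝ) (hinj : Function.Injective p)
    (hcyl : OnCylinder p) (hgen : CylGeneric p) :
    (CylInfRigid G p ∧ ∀ e ∈ G.edgeSet, ¬ CylInfRigid (G.deleteEdges {e}) p) ↔
      Tight22 G := by
  have : Nonempty V := Fintype.card_pos_iff.1 (by omega)
  have h_swap (i j : V) : edgeDir (p j) (p i) = -edgeDir (p i) (p j) := edgeDir_swap _ _
  simp only [cylInfRigid_iff_dirRigid hcyl]
  constructor
  · rintro ⟨h_rigid, h_minimal⟩
    exact tight22_of_minimal_dirRigid h_swap h_rigid h_minimal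
  · intro hG
    refine ⟨?_, fun e he => hG.not_dirRigid_deleteEdges h_swap he⟩
    obtain ⟨x, hx, rfl⟩ := hgen.exists_eq_cylPoint hcyl
    obtain ⟨y, hy⟩ := hG.exists_dirRigid
    exact (dirRigid_cylPoint_iff x).2 (hy.of_algebraicIndependent hx)
end
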